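/- Let K be a number field and h ≥ 2 an integer. Then ∑_{𝔪 ∈ 𝒩_h(x)} ω(𝔪) = κ_K·γ_h·x^{1/h}·log log x + κ_K·γ_h·𝔇₁·x^{1/h} + O_h(x^{1/h}/log x) as the real number x → ∞, where the implied constant depends only on h and K. -/

import Mathlib

open Filter Topology Asymptotics NumberField

noncomputable section

/-- The number of distinct (nonzero) prime ideals dividing the ideal `I`. -/
def omegaK {K : Type*} [Field K] [NumberField K] (I : Ideal (𝓞 K)) : ℕ :=
  {p : Ideal (𝓞 K) | p.IsPrime ∧ p ≠ ⊥ ∧ p ∣ I}.ncard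

/-- The ideal `I` is `h`-free: no prime ideal divides it to order `h`. -/
def HFreeI {K : Type*} [Field K] [NumberField K] (h : ℕ) (I : Ideal (𝓞 K)) : Prop :=
  ∀ p : Ideal (𝓞 K), p.IsPrime → p ≠ ⊥ → ¬ p ^ h ∣ I

/-- The ideal `I` is `h`-full: every prime ideal dividing it divides it to
order at least `h`. -/
def HFullI {K : Type*} [Field K] [NumberField K] (h : ℕ) (I : Ideal (𝓞 K)) : Prop :=
  ∀ p : Ideal (𝓞 K), p.IsPrime → p ≠ ⊥ → p ∣ I → p ^ h ∣ I

/-- The ideal-counting constant `κ_K = 2^{r₁} (2π)^{r₂} h_K R_K / (w_K √|d_K|)`. -/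
def kappaK (K : Type*) [Field K] [NumberField K] : ℝ :=
  (2 ^ InfinitePlace.nrRealPlaces K * (2 * Real.pi) ^ InfinitePlace.nrComplexPlaces K *
      (classNumber K) * Units.regulator K) /
    ((Units.torsionOrder K : ℕ) * Real.sqrt |(discr K : ℝ)|)

/-- The Dedekind zeta value `ζ_K(h) = ∑_{𝔞 ≠ 0} N(𝔞)^{-h}`. -/
def zetaK (K : Type*) [Field K] [NumberField K] (h : ℕ) : ℝ :=
  ∑' I : {I : Ideal (𝓞 K) // I ≠ ⊥}, 1 / (Ideal.absNorm I.val : ℝ) ^ h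

/-- `A` is the Mertens constant `𝔄` for the prime ideals of `K`:
`𝔄 = lim (∑_{N(𝔭) ≤ x} 1/N(𝔭) − log log x)`. -/
def MertensK (K : Type*) [Field K] [NumberField K] (A : ℝ) : Prop :=
  Tendsto (fun x : ℝ =>
      (∑ᶠ p ∈ {p : Ideal (𝓞 K) | p.IsPrime ∧ p ≠ ⊥ ∧ (Ideal.absNorm p : ℝ) ≤ x},
        1 / (Ideal.absNorm p : ℝ)) - Real.log (Real.log x))
    atTop (𝓝 A)

/-- The constant `𝔅 = -π²/6`. -/
def BconstK : ℝ := -(Real.pi ^ 2) / 6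

/-- The constant `ℭ₁` for `K`, given the Mertens constant `A`. -/
def C1K (K : Type*) [Field K] [NumberField K] (h : ℕ) (A : ℝ) : ℝ :=
  A - ∑' p : {p : Ideal (𝓞 K) // p.IsPrime ∧ p ≠ ⊥},
    ((Ideal.absNorm p.val : ℝ) - 1) /
      ((Ideal.absNorm p.val : ℝ) * ((Ideal.absNorm p.val : ℝ) ^ h - 1))

/-- The constant `ℭ₂` for `K`, given the Mertens constant `A`. -/
def C2K (K : Type*) [Field K] [NumberField K] (h : ℕ) (A : ℝ) : ℝ :=
  C1K K h A ^ 2 + C1K K h A + BconstK -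
    ∑' p : {p : Ideal (𝓞 K) // p.IsPrime ∧ p ≠ ⊥},
      (((Ideal.absNorm p.val : ℝ) ^ (h - 1) - 1) /
        ((Ideal.absNorm p.val : ℝ) ^ h - 1)) ^ 2

/-- The constant `γ_h` for `K`. -/
def gammaK (K : Type*) [Field K] [NumberField K] (h : ℕ) : ℝ :=
  ∏' p : {p : Ideal (𝓞 K) // p.IsPrime ∧ p ≠ ⊥},
    (1 + ((Ideal.absNorm p.val : ℝ) - (Ideal.absNorm p.val : ℝ) ^ (1 / (h : ℝ))) /
      ((Ideal.absNorm p.val : ℝ) ^ 2 *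
        ((Ideal.absNorm p.val : ℝ) ^ (1 / (h : ℝ)) - 1)))

/-- The convergent series `𝔏_h(r)` for `K`. -/
def LhK (K : Type*) [Field K] [NumberField K] (h : ℕ) (r : ℝ) : ℝ :=
  ∑' p : {p : Ideal (𝓞 K) // p.IsPrime ∧ p ≠ ⊥},
    1 / ((Ideal.absNorm p.val : ℝ) ^ (r / (h : ℝ) - 1) *
      ((Ideal.absNorm p.val : ℝ) -
        (Ideal.absNorm p.val : ℝ) ^ (1 - 1 / (h : ℝ)) + 1))

/-- The constant `𝔇₁` for `K`, given the Mertens constant `A`. -/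
def D1K (K : Type*) [Field K] [NumberField K] (h : ℕ) (A : ℝ) : ℝ :=
  A - Real.log (h : ℝ) + LhK K h ((h : ℝ) + 1) - LhK K h (2 * (h : ℝ))

/-- The constant `𝔇₂` for `K`, given the Mertens constant `A`. -/
def D2K (K : Type*) [Field K] [NumberField K] (h : ℕ) (A : ℝ) : ℝ :=
  D1K K h A ^ 2 + D1K K h A + BconstK -
    ∑' p : {p : Ideal (𝓞 K) // p.IsPrime ∧ p ≠ ⊥},
      ((Ideal.absNorm p.val : ℝ) -
        (Ideal.absNorm p.val : ℝ) ^ (1 - 1 / (h : ℝ)) + 1)⁻¹ ^ 2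

section FmG1

lemma fm_frontier_seg {E : Type*} [NormedAddCommGroup E] [NormedSpace ℝ E] (S : Set E) {x y : E}
    (hx : x ∈ S) (hy : y ∉ S) : ∃ z ∈ frontier S, dist y z ≤ dist y x := by
  have hp : IsPreconnected (segment ℝ x y) := (convex_segment x y).isPreconnected
  by_contra! hcon
  have hd : ∀ z ∈ segment ℝ x y, z ∉ frontier S := by
    intro z hz hf
    have h1 := hcon z hf
    have h2 : dist y z ≤ dist y x := by
      rw [segment_symm] at hz
      have := dist_add_dist_of_mem_segment hz
      have := dist_nonneg (x := z) (y := x)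
      linarith
    linarith
  obtain ⟨z, hz, hz1, hz2⟩ := hp (interior S) (closure S)ᶜ isOpen_interior
    isClosed_closure.isOpen_compl
    (by
      intro z hz
      by_cases h : z ∈ interior S
      · exact Or.inl h
      · right
        intro hc
        exact hd z hz ⟨hc, h⟩)
    ⟨x, left_mem_segment ℝ x y, by
      by_contra h
      exact hd x (left_mem_segment ℝ x y) ⟨subset_closure hx, h⟩⟩
    ⟨y, right_mem_segment ℝ x y, by
      intro h
      exact hd y (right_mem_segment ℝ x y) ⟨h, fun h' => hy (interior_subset h')⟩⟩
  exact hz2 (subset_closure (interior_subset hz1))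

open MeasureTheory Module Pointwise in
lemma fm_lattice_count {E : Type*} [NormedAddCommGroup E] [NormedSpace ℝ E] [FiniteDimensional ℝ E]
    [MeasurableSpace E] [BorelSpace E] (μ : Measure E) [μ.IsAddHaarMeasure]
    {ι : Type*} [Fintype ι] (b : Basis ι ℝ E) (D : Set E) (hDb : Bornology.IsBounded D)
    (hDm : MeasurableSet D) (C0 : ℝ)
    (hC0 : ∀ ε : ℝ, 0 < ε → ε ≤ 1 → μ.real (Metric.cthickening ε (frontier D)) ≤ C0 * ε) :
    ∃ c C t0 : ℝ, ∀ t ≥ t0,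
      |(Nat.card ↥{a : E | a ∈ Submodule.span ℤ (Set.range b) ∧ t⁻¹ • a ∈ D} : ℝ)
        - c * t ^ (finrank ℝ E)| ≤ C * (t ^ (finrank ℝ E) / t) := by
  classical
  set n := finrank ℝ E with hn
  set F := ZSpan.fundamentalDomain b with hF
  have hFb : Bornology.IsBounded F := ZSpan.fundamentalDomain_isBounded b
  obtain ⟨R0, hR0⟩ := hFb.exists_norm_le
  set R := max R0 1 with hR
  have hR1 : 1 ≤ R := le_max_right _ _
  have hRF : ∀ x ∈ F, ‖x‖ ≤ R := fun x hx => (hR0 x hx).trans (le_max_left _ _)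
  have hFm : MeasurableSet F := ZSpan.fundamentalDomain_measurableSet b
  have hF0 : μ F ≠ 0 := ZSpan.measure_fundamentalDomain_ne_zero b
  have hFt : μ F ≠ ⊤ := hFb.measure_lt_top.ne
  have hv : 0 < μ.real F := ENNReal.toReal_pos hF0 hFt
  set v := μ.real F with hvdef
  refine ⟨μ.real D / v, C0 * R / v, R, fun t ht => ?_⟩
  have ht0 : 0 < t := by linarith
  set A : Set E := {a : E | a ∈ Submodule.span ℤ (Set.range b) ∧ t⁻¹ • a ∈ D} with hA
  have hAfin : A.Finite := by
    have h1 : Bornology.IsBounded (t • D) := hDb.smul₀ t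
    refine (ZSpan.setFinite_inter b h1).subset ?_
    rintro a ⟨ha, hb⟩
    refine ⟨⟨_, hb, ?_⟩, ha⟩
    simp [smul_smul, ht0.ne']
  let cell : E → Set E := fun a => t⁻¹ • (a +ᵥ F)
  have hcellm : ∀ a, MeasurableSet (cell a) := fun a =>
    ((hFm.const_vadd a).const_smul₀ t⁻¹)
  have hcellv : ∀ a, μ.real (cell a) = (t ^ n)⁻¹ * v := by
    intro a
    simp only [cell, Measure.real, Measure.addHaar_smul, measure_vadd, ENNReal.toReal_mul]
    rw [ENNReal.toReal_ofReal (abs_nonneg _), abs_of_pos (by positivity), inv_pow]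
    rfl
  have hcellt : ∀ a, μ (cell a) ≠ ⊤ := by
    intro a h
    have := hcellv a
    rw [Measure.real, h] at this
    have h2 : 0 < (t ^ n)⁻¹ * v := by positivity
    simp at this
    rcases this with h | h
    · exact ht0.ne' h.1
    · exact hv.ne' h
  -- membership of cells
  have hmem : ∀ x a, a ∈ Submodule.span ℤ (Set.range b) →
      (x ∈ cell a ↔ a = (ZSpan.floor b (t • x) : E)) := by
    intro x a ha
    have e1 : x ∈ cell a ↔ t • x - a ∈ F := by
      simp only [cell]
      rw [Set.mem_smul_set_iff_inv_smul_mem₀ (by positivity), inv_inv,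
        Set.mem_vadd_set_iff_neg_vadd_mem, vadd_eq_add]
      rw [neg_add_eq_sub]
    rw [e1]
    constructor
    · intro h
      rw [hF, ← ZSpan.fract_eq_self, sub_eq_add_neg,
        ZSpan.fract_add_ZSpan b (t • x) (Submodule.neg_mem _ ha), ZSpan.fract_apply] at h
      have : (t • x - (ZSpan.floor b (t • x) : E)) = t • x - a := by rw [h, sub_eq_add_neg]
      exact (sub_right_injective this).symm
    · rintro rfl
      rw [← ZSpan.fract_apply]
      exact ZSpan.fract_mem_fundamentalDomain b _
  set U : Set E := ⋃ a ∈ hAfin.toFinset, cell a with hU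
  have hUm : MeasurableSet U := Finset.measurableSet_biUnion _ fun a _ => hcellm a
  have hUv : μ.real U = (Nat.card A : ℝ) * ((t ^ n)⁻¹ * v) := by
    rw [hU, measureReal_biUnion_finset ?_ (fun a _ => hcellm a) (fun a _ => hcellt a)]
    · simp only [hcellv, Finset.sum_const, nsmul_eq_mul]
      congr 2
      exact (Nat.card_eq_card_finite_toFinset hAfin).symm
    · intro a ha a' ha' hne
      simp only [Set.Finite.coe_toFinset] at ha ha'
      refine Set.disjoint_left.2 fun x hx hx' => hne ?_
      rw [(hmem x a ha.1).1 hx, (hmem x a' ha'.1).1 hx']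
  have hUt : μ U ≠ ⊤ := by
    refine ((measure_biUnion_finset_le _ _).trans_lt ?_).ne
    exact ENNReal.sum_lt_top.2 fun a _ => (hcellt a).lt_top
  have hDt : μ D ≠ ⊤ := hDb.measure_lt_top.ne
  have hsub : symmDiff U D ⊆ Metric.cthickening (R / t) (frontier D) := by
    have hfr : ∀ x, t • x - (ZSpan.floor b (t • x) : E) ∈ F := fun x => by
      rw [← ZSpan.fract_apply]
      exact ZSpan.fract_mem_fundamentalDomain b _
    have hdist : ∀ x, dist x (t⁻¹ • (ZSpan.floor b (t • x) : E)) ≤ R / t := by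
      intro x
      have : x - t⁻¹ • (ZSpan.floor b (t • x) : E) =
        t⁻¹ • (t • x - (ZSpan.floor b (t • x) : E)) := by
        rw [smul_sub, smul_smul, inv_mul_cancel₀ ht0.ne', one_smul]
      rw [dist_eq_norm, this, norm_smul, norm_inv, Real.norm_of_nonneg ht0.le, div_eq_inv_mul]
      gcongr
      exact hRF _ (hfr x)
    have hUmem : ∀ x, x ∈ U ↔ t⁻¹ • (ZSpan.floor b (t • x) : E) ∈ D := by
      intro x
      simp only [hU, Set.mem_iUnion, Set.Finite.mem_toFinset, exists_prop]
      constructor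
      · rintro ⟨a, ha, hx⟩
        rw [← (hmem x a ha.1).1 hx]; exact ha.2
      · intro h
        exact ⟨_, ⟨(ZSpan.floor b (t • x)).2, h⟩, (hmem x _ (ZSpan.floor b (t • x)).2).2 rfl⟩
    rintro x (⟨hx1, hx2⟩ | ⟨hx1, hx2⟩)
    · rw [hUmem] at hx1
      obtain ⟨z, hz, hzd⟩ := fm_frontier_seg D hx1 hx2
      exact Metric.mem_cthickening_of_dist_le x z _ _ hz (hzd.trans (hdist x))
    · rw [hUmem] at hx2
      have hx2' : t⁻¹ • (ZSpan.floor b (t • x) : E) ∈ Dᶜ := hx2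
      obtain ⟨z, hz, hzd⟩ := fm_frontier_seg Dᶜ hx2' (by simpa using hx1)
      rw [frontier_compl] at hz
      exact Metric.mem_cthickening_of_dist_le x z _ _ hz (hzd.trans (hdist x))
  have hfb : μ (Metric.cthickening (R / t) (frontier D)) ≠ ⊤ := by
    have : Bornology.IsBounded (frontier D) := hDb.closure.subset frontier_subset_closure
    exact this.cthickening.measure_lt_top.ne
  have key : |μ.real U - μ.real D| ≤ C0 * (R / t) := by
    refine (abs_measureReal_sub_le_measureReal_symmDiff' hUm.nullMeasurableSet
      hDm.nullMeasurableSet hUt hDt).trans ?_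
    refine (measureReal_mono hsub hfb).trans (hC0 _ (by positivity) ?_)
    rw [div_le_one ht0]; exact ht
  rw [hUv] at key
  have e : (Nat.card A : ℝ) - μ.real D / v * t ^ n =
      ((Nat.card A : ℝ) * ((t ^ n)⁻¹ * v) - μ.real D) * (t ^ n / v) := by
    have : t ^ n ≠ 0 := by positivity
    field_simp
  rw [e, abs_mul, abs_of_pos (show 0 < t ^ n / v by positivity)]
  calc _ ≤ C0 * (R / t) * (t ^ n / v) := by gcongr
    _ = _ := by field_simp

end FmG1

section FmG2

open MeasureTheory in
lemma fm_cube {ι : Type*} [Fintype ι] [Nonempty ι] (Ψ : (ι → ℝ) → (ι → ℝ)) (Kl : NNReal)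
    (hΨ : LipschitzOnWith Kl Ψ (Set.Icc 0 1)) :
    ∃ C : ℝ, 0 ≤ C ∧ ∀ ε : ℝ, 0 < ε → ε ≤ 1 →
      volume (Metric.cthickening ε (Ψ '' {z | z ∈ Set.Icc (0 : ι → ℝ) 1 ∧ ∃ i, z i = 0 ∨ z i = 1}))
        ≤ ENNReal.ofReal (C * ε) := by
  classical
  set d := Fintype.card ι with hd
  have hd0 : 0 < d := Fintype.card_pos
  refine ⟨d * (2 * 3 ^ (d - 1)) * (2 * (Kl + 2)) ^ d, by positivity, fun ε hε hε1 => ?_⟩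
  set M := ⌈1 / ε⌉₊ with hM
  have hM1 : 1 / ε ≤ M := Nat.le_ceil _
  have hMpos : 0 < (M : ℝ) := lt_of_lt_of_le (by positivity) hM1
  have hM2 : ((M : ℝ) + 1) ≤ 3 / ε := by
    have h1 : (M : ℝ) < 1 / ε + 1 := Nat.ceil_lt_add_one (by positivity)
    have h2 : 1 ≤ 1 / ε := by rw [le_div_iff₀ hε]; linarith
    have h3 : 3 / ε = 3 * (1 / ε) := by ring
    linarith
  have hM3 : 1 / (M : ℝ) ≤ ε := by
    rw [div_le_iff₀ hMpos]
    rw [div_le_iff₀ hε] at hM1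
    linarith
  let G : Finset (ι → Fin (M + 1)) := Finset.univ.biUnion fun i =>
    ({0, Fin.last M} : Finset (Fin (M + 1))).biUnion fun v => {k | k i = v}
  have hcard1 : ∀ (i : ι) (v : Fin (M + 1)),
      (({k : ι → Fin (M + 1) | k i = v} : Finset (ι → Fin (M + 1))).card) = (M + 1) ^ (d - 1) := by
    intro i v
    have : ({k : ι → Fin (M + 1) | k i = v} : Finset (ι → Fin (M + 1))) =
        Fintype.piFinset fun j => if j = i then {v} else Finset.univ := by
      ext k
      simp only [Finset.mem_filter, Finset.mem_univ, true_and, Fintype.mem_piFinset]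
      constructor
      · intro h j
        split_ifs with hj
        · subst hj; simp [h]
        · simp
      · intro h
        simpa using h i
    rw [this, Fintype.card_piFinset]
    rw [← Finset.mul_prod_erase _ _ (Finset.mem_univ i)]
    simp only [if_true, Finset.card_singleton, one_mul]
    rw [Finset.prod_congr rfl (g := fun _ => M + 1)]
    · rw [Finset.prod_const, Finset.card_erase_of_mem (Finset.mem_univ i), Finset.card_univ]
    · intro j hj
      rw [if_neg (Finset.ne_of_mem_erase hj)]; simp
  have hcard : G.card ≤ d * (2 * (M + 1) ^ (d - 1)) := by
    refine Finset.card_biUnion_le.trans ?_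
    have : ∀ i ∈ (Finset.univ : Finset ι), (({0, Fin.last M} : Finset (Fin (M + 1))).biUnion
        fun v => ({k : ι → Fin (M + 1) | k i = v} : Finset (ι → Fin (M + 1)))).card
        ≤ 2 * (M + 1) ^ (d - 1) := by
      intro i _
      refine Finset.card_biUnion_le.trans ?_
      simp only [hcard1, Finset.sum_const, smul_eq_mul]
      gcongr
      exact Finset.card_le_two
    refine (Finset.sum_le_sum this).trans ?_
    simp [hd]
  let g : (ι → Fin (M + 1)) → (ι → ℝ) := fun k i => (k i : ℕ) / (M : ℝ)
  have hgI : ∀ k, g k ∈ Set.Icc (0 : ι → ℝ) 1 := by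
    intro k
    constructor
    · intro i; simp only [g, Pi.zero_apply]; positivity
    · intro i
      simp only [g, Pi.one_apply]
      rw [div_le_one hMpos]
      exact_mod_cast Nat.lt_succ_iff.1 (k i).2
  have hsub : Metric.cthickening ε (Ψ '' {z | z ∈ Set.Icc (0 : ι → ℝ) 1 ∧ ∃ i, z i = 0 ∨ z i = 1})
      ⊆ ⋃ k ∈ G, Metric.closedBall (Ψ (g k)) ((Kl + 2) * ε) := by
    intro x hx
    have hx' := Metric.cthickening_subset_thickening' (δ₂ := 2 * ε) (by positivity)
      (by linarith) _ hx
    rw [Metric.mem_thickening_iff] at hx'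
    obtain ⟨_, ⟨z, ⟨hz, i, hi⟩, rfl⟩, hxz⟩ := hx'
    have hfl : ∀ j, ⌊z j * M⌋₊ < M + 1 := by
      intro j
      have := hz.2 j
      simp only [Pi.one_apply] at this
      have h2 : ⌊z j * M⌋₊ ≤ ⌊(M : ℝ)⌋₊ := by
        apply Nat.floor_mono
        nlinarith
      rw [Nat.floor_natCast] at h2
      omega
    let k : ι → Fin (M + 1) := fun j => ⟨⌊z j * M⌋₊, hfl j⟩
    have hkG : k ∈ G := by
      simp only [G, Finset.mem_biUnion, Finset.mem_univ, true_and, Finset.mem_insert,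
        Finset.mem_singleton, Finset.mem_filter]
      refine ⟨i, k i, ?_, rfl⟩
      rcases hi with h | h
      · left; ext; simp [k, h]
      · right; ext; simp [k, h]
    have hdist : dist z (g k) ≤ ε := by
      rw [dist_pi_le_iff hε.le]
      intro j
      simp only [g, k]
      have h0 := hz.1 j
      simp only [Pi.zero_apply] at h0
      have h1 := Nat.floor_le (show 0 ≤ z j * M by positivity)
      have h2 := Nat.lt_floor_add_one (z j * M)
      refine le_trans ?_ hM3
      rw [Real.dist_eq, abs_le]
      have e : z j = z j * M / M := by field_simp
      constructor
      · have : (⌊z j * M⌋₊ : ℝ) / M ≤ z j * M / M := by gcongr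
        have : 0 ≤ 1 / (M : ℝ) := by positivity
        linarith
      · have : z j * M / M ≤ ((⌊z j * M⌋₊ : ℝ) + 1) / M := by gcongr
        rw [add_div] at this
        linarith
    simp only [Set.mem_iUnion, exists_prop]
    refine ⟨k, hkG, ?_⟩
    rw [Metric.mem_closedBall]
    have h3 := hΨ.dist_le_mul z hz (g k) (hgI k)
    have h4 := dist_triangle x (Ψ z) (Ψ (g k))
    have h5 : (Kl : ℝ) * dist z (g k) ≤ Kl * ε := by gcongr
    nlinarith
  refine (measure_mono hsub).trans ((measure_biUnion_finset_le _ _).trans ?_)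
  have hball : ∀ k, volume (Metric.closedBall (Ψ (g k)) ((Kl + 2) * ε)) =
      ENNReal.ofReal ((2 * ((Kl + 2) * ε)) ^ d) := by
    intro k
    rw [Real.volume_pi_closedBall _ (by positivity)]
  simp only [hball, Finset.sum_const, nsmul_eq_mul]
  rw [← ENNReal.ofReal_natCast, ← ENNReal.ofReal_mul (by positivity)]
  apply ENNReal.ofReal_le_ofReal
  have hGr : (G.card : ℝ) ≤ d * (2 * (3 / ε) ^ (d - 1)) := by
    calc (G.card : ℝ) ≤ d * (2 * ((M : ℝ) + 1) ^ (d - 1)) := by exact_mod_cast hcard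
      _ ≤ _ := by gcongr
  calc (G.card : ℝ) * (2 * ((Kl + 2) * ε)) ^ d
      ≤ (d * (2 * (3 / ε) ^ (d - 1))) * (2 * ((Kl + 2) * ε)) ^ d := by gcongr
    _ = _ := by
      obtain ⟨e, he⟩ : ∃ e, d = e + 1 := ⟨d - 1, by omega⟩
      rw [he]
      simp only [Nat.add_sub_cancel, div_pow, mul_pow, pow_succ ε]
      field_simp

end FmG2

section FmG3

open MeasureTheory mixedEmbedding fundamentalCone NumberField.InfinitePlace
  NumberField.Units NumberField.Units.dirichletUnitTheorem Module

open scoped Classical in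
lemma fm_nap_lip (K : Type*) [Field K] [NumberField K] (x y : mixedSpace K) :
    dist (normAtAllPlaces x) (normAtAllPlaces y) ≤ dist x y := by
  rw [dist_pi_le_iff dist_nonneg]
  intro w
  simp only [normAtAllPlaces_apply]
  rw [Real.dist_eq, dist_eq_norm]
  obtain hw | hw := isReal_or_isComplex w
  · rw [normAtPlace_apply_of_isReal hw, normAtPlace_apply_of_isReal hw]
    refine (abs_norm_sub_norm_le _ _).trans ?_
    refine le_trans ?_ (norm_fst_le (x - y))
    exact norm_le_pi_norm (x - y).1 ⟨w, hw⟩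
  · rw [normAtPlace_apply_of_isComplex hw, normAtPlace_apply_of_isComplex hw]
    refine (abs_norm_sub_norm_le _ _).trans ?_
    refine le_trans ?_ (norm_snd_le (x - y))
    exact norm_le_pi_norm (x - y).2 ⟨w, hw⟩

open Classical in
/-- Parametrization of the boundary. -/
def fmPsi (K : Type*) [Field K] [NumberField K] (z : realSpace K) : realSpace K :=
  z w₀ • expMapBasis (fun i => if i = w₀ then 0 else z i)

lemma fm_psi_contDiff (K : Type*) [Field K] [NumberField K] : ContDiff ℝ 1 (fmPsi K) := by
  classical
  have h1 : ContDiff ℝ 1 (fun x : realSpace K => (expMapBasis x : realSpace K)) := by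
    have : (fun x : realSpace K => (expMapBasis x : realSpace K)) =
      fun x => fun w => Real.exp ((w.mult : ℝ)⁻¹ * ((completeBasis K).equivFunL.symm x) w) := by
      ext x w
      rfl
    rw [this]
    rw [contDiff_pi]
    intro w
    have h2 : ContDiff ℝ 1 (fun x : realSpace K => ((completeBasis K).equivFunL.symm x)) :=
      ContinuousLinearEquiv.contDiff _
    have h3 := contDiff_pi.1 h2 w
    exact Real.contDiff_exp.comp (contDiff_const.mul h3)
  have h4 : ContDiff ℝ 1 (fun z : realSpace K => (fun i => if i = w₀ then (0 : ℝ) else z i)) := by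
    rw [contDiff_pi]
    intro i
    split_ifs
    · exact contDiff_const
    · exact contDiff_apply ℝ ℝ i
  exact (contDiff_apply ℝ ℝ (w₀ : InfinitePlace K)).smul (h1.comp h4)

lemma fm_frontier_sub (K : Type*) [Field K] [NumberField K] :
    frontier (normLeOne K) ⊆ normAtAllPlaces ⁻¹'
      (fmPsi K '' {z | z ∈ Set.Icc (0 : realSpace K) 1 ∧ ∃ i, z i = 0 ∨ z i = 1}) := by
  classical
  rintro x ⟨hx1, hx2⟩
  have h1 := closure_normLeOne_subset K hx1
  have h2 : x ∉ normAtAllPlaces ⁻¹' (expMapBasis '' interior (paramSet K)) :=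
    fun h => hx2 (subset_interior_normLeOne K h)
  simp only [Set.mem_preimage] at h1 h2 ⊢
  obtain ⟨c, hc, _, ⟨y, hy, rfl⟩, hxy⟩ := h1
  rw [Set.mem_univ_pi] at hy
  let z : realSpace K := fun w => if w = w₀ then c else y w
  have hzI : z ∈ Set.Icc (0 : realSpace K) 1 := by
    constructor <;> intro w <;> simp only [z, Pi.zero_apply, Pi.one_apply] <;>
      split_ifs with hw
    · exact hc.1
    · have := hy w; rw [if_neg hw] at this; exact this.1
    · exact hc.2
    · have := hy w; rw [if_neg hw] at this; exact this.2
  have hy0 : (fun i => if i = w₀ then 0 else z i) = y := by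
    ext w
    split_ifs with hw
    · have := hy w; rw [if_pos hw] at this; simpa using this.symm
    · simp [z, hw]
  have hzx : fmPsi K z = normAtAllPlaces x := by
    rw [fmPsi, hy0, ← hxy]
    simp [z]
  refine ⟨z, ⟨hzI, ?_⟩, hzx⟩
  by_contra! hcon
  apply h2
  rw [interior_paramSet, ← hzx]
  have hz0 : 0 < z w₀ := lt_of_le_of_ne (hzI.1 w₀) (Ne.symm (hcon w₀).1)
  refine ⟨fun w => if w = w₀ then Real.log (z w₀) else z w, ?_, ?_⟩
  · rw [Set.mem_univ_pi]
    intro w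
    have h3 : 0 < z w := lt_of_le_of_ne (hzI.1 w) (Ne.symm (hcon w).1)
    have h4 : z w < 1 := lt_of_le_of_ne (hzI.2 w) (hcon w).2
    split_ifs with hw
    · subst hw; exact Real.log_neg h3 h4
    · exact ⟨h3, h4⟩
  · rw [expMapBasis_apply'', if_pos rfl, Real.exp_log hz0, fmPsi]
    congr 2
    ext w
    split_ifs <;> rfl

open scoped Classical in
lemma fm_frontier_vol (K : Type*) [Field K] [NumberField K] :
    ∃ C : ℝ, ∀ ε : ℝ, 0 < ε → ε ≤ 1 →
      (volume : Measure (mixedSpace K)).real (Metric.cthickening ε (frontier (normLeOne K))) ≤ C * ε := by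
  classical
  obtain ⟨Kl, hKl⟩ := LocallyLipschitzOn.exists_lipschitzOnWith_of_compact
    (isCompact_Icc : IsCompact (Set.Icc (0 : realSpace K) 1))
    ((fm_psi_contDiff K).locallyLipschitz.locallyLipschitzOn)
  obtain ⟨C, hC0, hC⟩ := fm_cube (fmPsi K) Kl hKl
  set S := fmPsi K '' {z | z ∈ Set.Icc (0 : realSpace K) 1 ∧ ∃ i, z i = 0 ∨ z i = 1} with hS
  have hSb : Bornology.IsBounded S := by
    refine ((isCompact_Icc (a := (0 : realSpace K)) (b := 1)).image_of_continuousOn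
      (fm_psi_contDiff K).continuous.continuousOn).isBounded.subset ?_
    exact Set.image_mono fun z hz => hz.1
  obtain ⟨R0, hR0⟩ := (hSb.cthickening (δ := 1)).exists_norm_le
  set R := max R0 1 with hR
  set k := nrComplexPlaces K
  set Q : ENNReal := 2 ^ nrRealPlaces K * .ofReal (2 * Real.pi) ^ nrComplexPlaces K with hQ
  have hQt : Q ≠ ⊤ := by finiteness
  refine ⟨Q.toReal * (R ^ (Fintype.card {w : InfinitePlace K // IsComplex w}) * C), fun ε hε hε1 => ?_⟩
  set B := Metric.cthickening ε S with hB
  have hBm : MeasurableSet B := Metric.isClosed_cthickening.measurableSet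
  have hsub : Metric.cthickening ε (frontier (normLeOne K)) ⊆ normAtAllPlaces ⁻¹' B := by
    intro x hx
    rw [Metric.mem_cthickening_iff] at hx
    simp only [Set.mem_preimage, hB]
    rw [Metric.mem_cthickening_iff]
    refine le_trans ?_ hx
    refine Metric.le_infEDist.2 fun y hy => ?_
    have hyS : normAtAllPlaces y ∈ S := fm_frontier_sub K hy
    refine (Metric.infEDist_le_edist_of_mem hyS).trans ?_
    rw [edist_dist, edist_dist]
    exact ENNReal.ofReal_le_ofReal (fm_nap_lip K x y)
  have hA : normAtAllPlaces ⁻¹' (normAtAllPlaces '' (normAtAllPlaces ⁻¹' B)) =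
      (normAtAllPlaces ⁻¹' B : Set (mixedSpace K)) := by
    refine subset_antisymm ?_ (Set.subset_preimage_image _ _)
    exact Set.preimage_mono (Set.image_preimage_subset _ _)
  have hvol : volume (normAtAllPlaces ⁻¹' B : Set (mixedSpace K)) ≤
      Q * (ENNReal.ofReal R ^ (Fintype.card {w : InfinitePlace K // IsComplex w}) *
        ENNReal.ofReal (C * ε)) := by
    rw [volume_eq_two_pow_mul_two_pi_pow_mul_integral hA
      (hBm.preimage (continuous_normAtAllPlaces K).measurable)]
    refine mul_le_mul_right ?_ _
    refine (lintegral_mono_set (Set.image_preimage_subset _ _)).trans ?_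
    calc _ ≤ ∫⁻ x in B, ENNReal.ofReal R ^ (Fintype.card {w : InfinitePlace K // IsComplex w}) := by
          refine setLIntegral_mono measurable_const fun x hx => ?_
          calc _ ≤ ∏ w : {w : InfinitePlace K // IsComplex w}, ENNReal.ofReal R := by
                refine Finset.prod_le_prod' fun w _ => ENNReal.ofReal_le_ofReal ?_
                have h1 := hR0 x (Metric.cthickening_mono hε1 _ hx)
                have h2 := norm_le_pi_norm x w.1
                exact (le_abs_self _).trans (h2.trans (h1.trans (le_max_left _ _)))
            _ = _ := by rw [Finset.prod_const, Finset.card_univ]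
      _ ≤ _ := by
        rw [setLIntegral_const]
        exact mul_le_mul_right (hC ε hε hε1) _
  have hfin := (measure_mono hsub).trans hvol
  have hR1 : 0 ≤ R := le_trans zero_le_one (le_max_right _ _)
  rw [Measure.real]
  refine (ENNReal.toReal_mono (by finiteness) hfin).trans ?_
  clear_value Q
  rw [ENNReal.toReal_mul, ENNReal.toReal_mul, ENNReal.toReal_pow, ENNReal.toReal_ofReal hR1,
    ENNReal.toReal_ofReal (by positivity)]
  exact le_of_eq (by ring)

open scoped nonZeroDivisors
open Ideal

lemma fm_aux1 (K : Type*) [Field K] [NumberField K] {C : ClassGroup (𝓞 K)} {J : (Ideal (𝓞 K))⁰}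
    {s : ℝ} (hJ : ClassGroup.mk0 J = C⁻¹) :
    Nat.card {I : (Ideal (𝓞 K))⁰ // absNorm (I : Ideal (𝓞 K)) ≤ s ∧ ClassGroup.mk0 I = C}
      = Nat.card {I : (Ideal (𝓞 K))⁰ // (J : Ideal (𝓞 K)) ∣ I ∧ Submodule.IsPrincipal (I : Ideal (𝓞 K)) ∧
        absNorm (I : Ideal (𝓞 K)) ≤ s * absNorm (J : Ideal (𝓞 K))} := by
  simp_rw [← nonZeroDivisors_dvd_iff_dvd_coe]
  refine Nat.card_congr ?_
  refine ((Equiv.dvd J).subtypeEquiv fun I ↦ ?_).trans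
    (Equiv.subtypeSubtypeEquivSubtypeInter (fun I : (Ideal (𝓞 K))⁰ ↦ J ∣ I) _)
  rw [← ClassGroup.mk0_eq_one_iff (SetLike.coe_mem _)]
  simp_rw [Equiv.dvd_apply, Submonoid.coe_mul, ← Submonoid.mul_def, _root_.map_mul, hJ,
    inv_mul_eq_one, Nat.cast_mul, mul_comm s, eq_comm, and_comm, and_congr_left_iff]
  exact fun _ ↦
    (mul_le_mul_iff_of_pos_left (Nat.cast_pos.mpr (absNorm_pos_of_nonZeroDivisors J))).symm

lemma fm_class_count (K : Type*) [Field K] [NumberField K] (C : ClassGroup (𝓞 K)) :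
    ∃ c C1 s0 : ℝ, ∀ s ≥ s0,
      |(Nat.card {I : (Ideal (𝓞 K))⁰ //
        absNorm (I : Ideal (𝓞 K)) ≤ s ∧ ClassGroup.mk0 I = C} : ℝ) - c * s| ≤
        C1 * s ^ (1 - 1 / (finrank ℚ K : ℝ)) := by
  classical
  obtain ⟨J, hJ⟩ := ClassGroup.mk0_surjective C⁻¹
  obtain ⟨C0, hC0⟩ := fm_frontier_vol K
  set L := idealLattice K (FractionalIdeal.mk0 K J) with hL
  let b0 := Module.Free.chooseBasis ℤ L
  let b := b0.ofZLatticeBasis ℝ L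
  have hspan : Submodule.span ℤ (Set.range b) = L := b0.ofZLatticeBasis_span ℝ
  obtain ⟨c, C1, t0, hct⟩ := fm_lattice_count (volume : Measure (mixedSpace K)) b (normLeOne K)
    (isBounded_normLeOne K) (measurableSet_normLeOne K) C0 hC0
  set n := finrank ℚ K with hn
  have hn0 : 0 < n := finrank_pos
  have hnr : (n : ℝ) ≠ 0 := by positivity
  have hfr : finrank ℝ (mixedSpace K) = n := mixedEmbedding.finrank K
  rw [hfr, hspan] at hct
  set NJ : ℝ := (absNorm (J : Ideal (𝓞 K)) : ℝ) with hNJ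
  have hNJ0 : 0 < NJ := Nat.cast_pos.mpr (absNorm_pos_of_nonZeroDivisors J)
  set tor : ℝ := (torsionOrder K : ℝ) with htor
  have htor0 : 0 < tor := by
    have := torsionOrder_ne_zero K
    simp only [htor]; positivity
  refine ⟨c * NJ / tor, C1 * NJ ^ (1 - 1 / (n : ℝ)) / tor, max 1 ((max t0 0) ^ n / NJ), fun s hs => ?_⟩
  have hs1 : 1 ≤ s := (le_max_left _ _).trans hs
  have hs2 : (max t0 0) ^ n ≤ s * NJ := by
    have := (le_max_right _ _).trans hs
    rwa [div_le_iff₀ hNJ0] at this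
  set t := (s * NJ) ^ (1 / (n : ℝ)) with ht
  have hsNJ : 0 < s * NJ := by positivity
  have ht_pos : 0 < t := Real.rpow_pos_of_pos hsNJ _
  have htn : t ^ n = s * NJ := by
    rw [ht, ← Real.rpow_natCast, ← Real.rpow_mul hsNJ.le]
    simp [hnr]
  have htt0 : t0 ≤ t := by
    have h1 : (max t0 0) ≤ t := by
      refine le_of_pow_le_pow_left₀ hn0.ne' ht_pos.le ?_
      rw [htn]; exact hs2
    exact (le_max_left _ _).trans h1
  have hcount := hct t htt0
  have hcard : (Nat.card {I : (Ideal (𝓞 K))⁰ //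
        absNorm (I : Ideal (𝓞 K)) ≤ s ∧ ClassGroup.mk0 I = C} : ℝ) * tor =
      (Nat.card ↥{a : mixedSpace K | a ∈ L ∧ t⁻¹ • a ∈ normLeOne K} : ℝ) := by
    rw [fm_aux1 K hJ, htor]
    norm_cast
    rw [card_isPrincipal_dvd_norm_le]
    refine Nat.card_congr ?_
    refine (Equiv.subtypeSubtypeEquivSubtypeInter (fun a : mixedSpace K => a ∈ idealSet K J)
      (fun a => mixedEmbedding.norm a ≤ s * NJ)).trans (Equiv.subtypeEquivProp ?_)
    ext a
    show (a ∈ idealSet K J ∧ mixedEmbedding.norm a ≤ s * NJ) ↔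
      (a ∈ L ∧ (t⁻¹ • a ∈ fundamentalCone K ∧ mixedEmbedding.norm (t⁻¹ • a) ≤ 1))
    rw [smul_mem_iff_mem (inv_ne_zero ht_pos.ne'), mixedEmbedding.norm_smul, abs_inv,
      abs_of_pos ht_pos, inv_pow, ← hn, htn, inv_mul_le_iff₀ hsNJ, mul_one, mem_idealSet, hL,
      mem_idealLattice]
    constructor
    · rintro ⟨⟨h1, x, hx, hxa⟩, h2⟩
      exact ⟨⟨(x : K), by simpa using hx, hxa⟩, h1, h2⟩
    · rintro ⟨⟨x, hx, hxa⟩, h1, h2⟩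
      simp only [FractionalIdeal.coe_mk0] at hx
      obtain ⟨x', hx', rfl⟩ := hx
      exact ⟨⟨h1, ⟨x', hx', hxa⟩⟩, h2⟩
  rw [← hcard, htn] at hcount
  have e1 : s * NJ / t = s ^ (1 - 1 / (n : ℝ)) * NJ ^ (1 - 1 / (n : ℝ)) := by
    rw [ht, ← Real.mul_rpow (by positivity) hNJ0.le, Real.rpow_sub hsNJ, Real.rpow_one]
  rw [e1] at hcount
  set q : ℝ := (Nat.card {I : (Ideal (𝓞 K))⁰ //
        absNorm (I : Ideal (𝓞 K)) ≤ s ∧ ClassGroup.mk0 I = C} : ℝ)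
  have e2 : q - c * NJ / tor * s = (q * tor - c * (s * NJ)) / tor := by field_simp
  rw [e2, abs_div, abs_of_pos htor0, div_le_iff₀ htor0]
  refine hcount.trans (le_of_eq ?_)
  field_simp

end FmG3

section FmG4

section
open Module NumberField.InfinitePlace NumberField.Units
open scoped nonZeroDivisors
open Ideal

lemma fm_kappa_pos (K : Type*) [Field K] [NumberField K] : 0 < kappaK K := by
  unfold kappaK
  have h1 := regulator_pos K
  have h2 : 0 < (classNumber K : ℝ) := Nat.cast_pos.2 (by unfold classNumber; exact Fintype.card_pos)
  have h3 : 0 < (torsionOrder K : ℝ) := Nat.cast_pos.2 (Nat.pos_of_ne_zero (torsionOrder_ne_zero K))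
  have h4 : 0 < |(discr K : ℝ)| := abs_pos.2 (by exact_mod_cast discr_ne_zero K)
  have h5 := Real.sqrt_pos.2 h4
  have := Real.pi_pos
  positivity

lemma fm_ideal_fin (K : Type*) [Field K] [NumberField K] (s : ℝ) :
    Finite {I : (Ideal (𝓞 K))⁰ // (absNorm (I : Ideal (𝓞 K)) : ℝ) ≤ s} := by
  obtain hs | hs := le_or_gt 0 s
  · simp_rw [← Nat.le_floor_iff hs]
    exact finite_setOfPred_absNorm_le₀ ⌊s⌋₊
  · have : IsEmpty {I : (Ideal (𝓞 K))⁰ // (absNorm (I : Ideal (𝓞 K)) : ℝ) ≤ s} :=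
      ⟨fun I => absurd (hs.trans_le (Nat.cast_nonneg _)) (not_lt.2 I.2)⟩
    infer_instance

lemma fm_ideal_count0 (K : Type*) [Field K] [NumberField K] :
    ∃ c C1 s0 : ℝ, ∀ s ≥ s0,
      |(Nat.card {I : (Ideal (𝓞 K))⁰ // absNorm (I : Ideal (𝓞 K)) ≤ s} : ℝ) - c * s| ≤
        C1 * s ^ (1 - 1 / (finrank ℚ K : ℝ)) := by
  classical
  choose c C1 s0 H using fm_class_count K
  obtain ⟨S, hS⟩ : ∃ S, ∀ C, s0 C ≤ S := by
    obtain ⟨S, hS⟩ := (Set.finite_range s0).bddAbove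
    exact ⟨S, fun C => hS ⟨C, rfl⟩⟩
  refine ⟨∑ C, c C, ∑ C, C1 C, S, fun s hs => ?_⟩
  have hcard : (Nat.card {I : (Ideal (𝓞 K))⁰ // absNorm (I : Ideal (𝓞 K)) ≤ s} : ℝ) =
      ∑ C, (Nat.card {I : (Ideal (𝓞 K))⁰ //
        absNorm (I : Ideal (𝓞 K)) ≤ s ∧ ClassGroup.mk0 I = C} : ℝ) := by
    have := fm_ideal_fin K s
    have : Fintype {I : (Ideal (𝓞 K))⁰ // (absNorm (I : Ideal (𝓞 K)) : ℝ) ≤ s} := Fintype.ofFinite _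
    let e := fun C : ClassGroup (𝓞 K) ↦ Equiv.subtypeSubtypeEquivSubtypeInter
      (fun I : (Ideal (𝓞 K))⁰ ↦ (absNorm I.1 : ℝ) ≤ s) (fun I ↦ ClassGroup.mk0 I = C)
    simp_rw [← Nat.card_congr (e _), Nat.card_eq_fintype_card, Fintype.subtype_card]
    rw [Fintype.card, Finset.card_eq_sum_card_fiberwise (f := fun I ↦ ClassGroup.mk0 I.1)
      (t := Finset.univ) (fun _ _ ↦ Finset.mem_univ _), Nat.cast_sum]
  rw [hcard, Finset.sum_mul, Finset.sum_mul, ← Finset.sum_sub_distrib]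
  refine (Finset.abs_sum_le_sum_abs _ _).trans (Finset.sum_le_sum fun C _ => ?_)
  exact H C s ((hS C).trans hs)

lemma fm_ideal_count (K : Type*) [Field K] [NumberField K] :
    ∃ θ C : ℝ, 1 / 2 ≤ θ ∧ θ < 1 ∧ 0 ≤ C ∧ ∀ s : ℝ, 1 ≤ s →
      |(Nat.card {I : (Ideal (𝓞 K))⁰ // absNorm (I : Ideal (𝓞 K)) ≤ s} : ℝ) - kappaK K * s| ≤
        C * s ^ θ := by
  obtain ⟨c, C1, s0, H⟩ := fm_ideal_count0 K
  set n : ℝ := (finrank ℚ K : ℝ)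
  have hn1 : 1 ≤ n := Nat.one_le_cast.2 (finrank_pos (R := ℚ) (M := K))
  have hn0 : 0 < n := by linarith
  set F : ℝ → ℝ := fun s => (Nat.card {I : (Ideal (𝓞 K))⁰ // absNorm (I : Ideal (𝓞 K)) ≤ s} : ℝ) with hF
  have hc : c = kappaK K := by
    have h1 := NumberField.Ideal.tendsto_norm_le_div_atTop₀ K
    have h2 : Tendsto (fun s => F s / s) atTop (𝓝 c) := by
      have h3 : Tendsto (fun s : ℝ => C1 * s ^ (-(1 / n))) atTop (𝓝 0) := by
        have := (tendsto_rpow_neg_atTop (y := 1 / n) (by positivity)).const_mul C1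
        simpa using this
      rw [tendsto_iff_norm_sub_tendsto_zero]
      refine squeeze_zero' (Eventually.of_forall fun _ => norm_nonneg _) ?_ h3
      filter_upwards [eventually_ge_atTop s0, eventually_gt_atTop 0] with s hs hs0
      have := H s hs
      rw [Real.norm_eq_abs]
      have e : F s / s - c = (F s - c * s) / s := by field_simp
      rw [e, abs_div, abs_of_pos hs0, div_le_iff₀ hs0]
      refine this.trans (le_of_eq ?_)
      rw [mul_assoc, ← Real.rpow_add_one hs0.ne']
      congr 2; ring
    have := tendsto_nhds_unique h2 h1
    rw [this, kappaK]
    ring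
  have hmono : ∀ s t : ℝ, s ≤ t → F s ≤ F t := by
    intro s t hst
    have := fm_ideal_fin K t
    simp only [hF]
    norm_cast
    refine Nat.card_le_card_of_injective (fun I => ⟨I.1, I.2.trans hst⟩) ?_
    rintro ⟨a, ha⟩ ⟨b, hb⟩ hab
    simpa using hab
  have hθ : 1 - 1 / n ≤ 1 - 1 / (n + 1) := by
    have : 1 / (n + 1) ≤ 1 / n := one_div_le_one_div_of_le hn0 (by linarith)
    linarith
  have hθ0 : (0 : ℝ) ≤ 1 - 1 / (n + 1) := by
    have : 1 / (n + 1) ≤ 1 := by rw [div_le_one (by linarith)]; linarith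
    linarith
  have hκ := fm_kappa_pos K
  refine ⟨1 - 1 / (n + 1), |C1| + F (max s0 1) + kappaK K * max s0 1, ?_, ?_, ?_, ?_⟩
  · have : 1 / (n + 1) ≤ 1 / 2 := one_div_le_one_div_of_le (by norm_num) (by linarith)
    linarith
  · have : 0 < 1 / (n + 1) := by positivity
    linarith
  · have : 0 ≤ F (max s0 1) := Nat.cast_nonneg _
    have : (0:ℝ) ≤ max s0 1 := le_trans zero_le_one (le_max_right _ _)
    positivity
  intro s hs
  have h0 : 0 ≤ F (max s0 1) := Nat.cast_nonneg _
  have h01 : (0:ℝ) ≤ max s0 1 := le_trans zero_le_one (le_max_right _ _)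
  have h02 : 0 ≤ kappaK K * max s0 1 := by positivity
  have h1s : 1 ≤ s ^ (1 - 1 / (n + 1)) := Real.one_le_rpow hs hθ0
  obtain hs0 | hs0 := le_total s0 s
  · have h1 := H s hs0
    rw [hc] at h1
    refine h1.trans ?_
    have h2 : s ^ (1 - 1 / n) ≤ s ^ (1 - 1 / (n + 1)) := Real.rpow_le_rpow_of_exponent_le hs hθ
    calc C1 * s ^ (1 - 1 / n) ≤ |C1| * s ^ (1 - 1 / n) := by
          gcongr; exact le_abs_self _
      _ ≤ |C1| * s ^ (1 - 1 / (n + 1)) := by gcongr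
      _ ≤ _ := by gcongr; linarith
  · have hsm : s ≤ max s0 1 := hs0.trans (le_max_left _ _)
    have h1 := hmono _ _ hsm
    have h2 : 0 ≤ F s := Nat.cast_nonneg _
    have h3 : kappaK K * s ≤ kappaK K * max s0 1 := by gcongr
    have h4 : 0 ≤ kappaK K * s := by positivity
    have h5 := abs_nonneg C1
    calc |F s - kappaK K * s| ≤ F (max s0 1) + kappaK K * max s0 1 := by
          rw [abs_le]; constructor <;> linarith
      _ ≤ |C1| + F (max s0 1) + kappaK K * max s0 1 := by linarith
      _ ≤ _ := le_mul_of_one_le_right (by linarith) h1s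
end

end FmG4

section FmA1

lemma fm_dyadic (F g : ℝ → ℝ) (hF : ∀ x < 1, F x = 0) (hg : ∀ x, 1 / 2 ≤ x → x < 1 → 0 ≤ g x)
    (hs : ∀ x, 1 ≤ x → F x - F (x / 2) ≤ g x - g (x / 2)) : ∀ x, 1 / 2 ≤ x → F x ≤ g x := by
  have key : ∀ k : ℕ, ∀ x, 1 / 2 ≤ x → x < 2 ^ k → F x ≤ g x := by
    intro k
    induction k with
    | zero => intro x h1 h2; rw [pow_zero] at h2; rw [hF x h2]; exact hg x h1 h2
    | succ k ih =>
      intro x h1 h2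
      obtain h3 | h3 := lt_or_ge x 1
      · rw [hF x h3]; exact hg x h1 h3
      · have := ih (x / 2) (by linarith) (by rw [pow_succ] at h2; linarith)
        have := hs x h3
        linarith
  intro x hx
  obtain ⟨k, hk⟩ := pow_unbounded_of_one_lt x (one_lt_two)
  exact key k x hx hk

/-- Weighted finite family. -/
lemma fm_powsum_step {ι : Type*} (n w : ι → ℝ) (hn : ∀ i, 1 ≤ n i) (hw : ∀ i, 0 ≤ w i)
    (B : ℝ → Finset ι) (hB : ∀ x i, i ∈ B x ↔ n i ≤ x) (C : ℝ)
    (hC : ∀ x, 1 ≤ x → ∑ i ∈ B x, w i ≤ C * x) (s : ℝ) (hs0 : 0 ≤ s) (x : ℝ) (hx : 1 ≤ x) :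
    ∑ i ∈ B x, w i * n i ^ (-s) - ∑ i ∈ B (x / 2), w i * n i ^ (-s) ≤
      2 ^ s * C * x ^ (1 - s) := by
  classical
  have hsub : B (x / 2) ⊆ B x := by
    intro i hi; rw [hB] at hi ⊢; linarith
  rw [← Finset.sum_sdiff hsub, add_sub_cancel_right]
  have hx0 : 0 < x := by linarith
  calc ∑ i ∈ B x \ B (x / 2), w i * n i ^ (-s) ≤ ∑ i ∈ B x \ B (x / 2), w i * (x / 2) ^ (-s) := by
        refine Finset.sum_le_sum fun i hi => ?_
        rw [Finset.mem_sdiff, hB, hB, not_le] at hi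
        refine mul_le_mul_of_nonneg_left ?_ (hw i)
        exact Real.rpow_le_rpow_of_nonpos (by linarith) hi.2.le (by linarith)
    _ ≤ ∑ i ∈ B x, w i * (x / 2) ^ (-s) := by
        refine Finset.sum_le_sum_of_subset_of_nonneg Finset.sdiff_subset fun i _ _ => ?_
        have := hw i
        positivity
    _ = (∑ i ∈ B x, w i) * (x / 2) ^ (-s) := by rw [Finset.sum_mul]
    _ ≤ C * x * (x / 2) ^ (-s) := by
        refine mul_le_mul_of_nonneg_right (hC x hx) (by positivity)
    _ = _ := by
        rw [Real.div_rpow hx0.le (by norm_num), Real.rpow_neg (by norm_num : (0:ℝ) ≤ 2), div_inv_eq_mul,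
          sub_eq_add_neg, Real.rpow_add hx0, Real.rpow_one]
        ring

lemma fm_powsum_lt {ι : Type*} (n w : ι → ℝ) (hn : ∀ i, 1 ≤ n i) (hw : ∀ i, 0 ≤ w i)
    (B : ℝ → Finset ι) (hB : ∀ x i, i ∈ B x ↔ n i ≤ x) (C : ℝ) (hC0 : 0 ≤ C)
    (hC : ∀ x, 1 ≤ x → ∑ i ∈ B x, w i ≤ C * x) (s : ℝ) (hs0 : 0 ≤ s) (hs1 : s < 1) :
    ∃ C', 0 ≤ C' ∧ ∀ x, 1 / 2 ≤ x → ∑ i ∈ B x, w i * n i ^ (-s) ≤ C' * x ^ (1 - s) := by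
  have h2 : (2:ℝ) ^ (-(1 - s)) < 1 := Real.rpow_lt_one_of_one_lt_of_neg (by norm_num) (by linarith)
  have h3 : 0 < 1 - (2:ℝ) ^ (-(1 - s)) := by linarith
  have hC' : 0 ≤ 2 ^ s * C / (1 - (2:ℝ) ^ (-(1 - s))) := by positivity
  refine ⟨2 ^ s * C / (1 - (2:ℝ) ^ (-(1 - s))), hC', ?_⟩
  refine fm_dyadic _ _ ?_ ?_ ?_
  · intro x hx
    refine Finset.sum_eq_zero fun i hi => ?_
    rw [hB] at hi
    have := hn i
    linarith
  · intro x hx _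
    positivity
  · intro x hx
    refine (fm_powsum_step n w hn hw B hB C hC s hs0 x hx).trans (le_of_eq ?_)
    rw [Real.div_rpow (by linarith) (by norm_num)]
    rw [Real.rpow_neg (by norm_num)] at h3 ⊢
    have h5 : (0:ℝ) < 2 ^ (1 - s) := by positivity
    have h4 : (2:ℝ) ^ (1 - s) - 1 ≠ 0 := by
      have : (1:ℝ) < 2 ^ (1 - s) := Real.one_lt_rpow (by norm_num) (by linarith)
      linarith
    field_simp

lemma fm_powsum_gt {ι : Type*} (n w : ι → ℝ) (hn : ∀ i, 1 ≤ n i) (hw : ∀ i, 0 ≤ w i)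
    (B : ℝ → Finset ι) (hB : ∀ x i, i ∈ B x ↔ n i ≤ x) (C : ℝ) (hC0 : 0 ≤ C)
    (hC : ∀ x, 1 ≤ x → ∑ i ∈ B x, w i ≤ C * x) (s : ℝ) (hs1 : 1 < s) :
    Summable fun i => w i * n i ^ (-s) := by
  have h2 : 1 < (2:ℝ) ^ (s - 1) := Real.one_lt_rpow (by norm_num) (by linarith)
  have h3 : 0 < (2:ℝ) ^ (s - 1) - 1 := by linarith
  set m := 2 ^ s * C / ((2:ℝ) ^ (s - 1) - 1) with hm
  have hm0 : 0 ≤ m := by positivity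
  have key : ∀ x, 1 / 2 ≤ x → ∑ i ∈ B x, w i * n i ^ (-s) ≤ m * 2 ^ (s - 1) - m * x ^ (1 - s) := by
    refine fm_dyadic _ _ ?_ ?_ ?_
    · intro x hx
      refine Finset.sum_eq_zero fun i hi => ?_
      rw [hB] at hi
      have := hn i
      linarith
    · intro x hx _
      have : x ^ (1 - s) ≤ (1 / 2) ^ (1 - s) :=
        Real.rpow_le_rpow_of_nonpos (by norm_num) hx (by linarith)
      have e : ((1:ℝ) / 2) ^ (1 - s) = 2 ^ (s - 1) := by
        rw [one_div, Real.inv_rpow (by norm_num), ← Real.rpow_neg (by norm_num)]; congr 1; ring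
      rw [e] at this
      nlinarith
    · intro x hx
      refine (fm_powsum_step n w hn hw B hB C hC s (by linarith) x hx).trans (le_of_eq ?_)
      rw [Real.div_rpow (by linarith) (by norm_num)]
      have e : (2:ℝ) ^ (s - 1) = (2 ^ (1 - s))⁻¹ := by
        rw [← Real.rpow_neg (by norm_num)]; congr 1; ring
      have e2 : m * ((2:ℝ) ^ (s - 1) - 1) = 2 ^ s * C := by
        rw [hm]; field_simp
      rw [← e2, e]
      have : (0:ℝ) < 2 ^ (1 - s) := by positivity
      field_simp
      ring
  refine summable_of_sum_le (c := m * 2 ^ (s - 1)) ?_ ?_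
  · intro i
    have := hw i
    have := hn i
    positivity
  · intro u
    obtain ⟨X, hX⟩ : ∃ X : ℝ, ∀ i ∈ u, n i ≤ X := by
      obtain ⟨X, hX⟩ := (u.finite_toSet.image n).bddAbove
      exact ⟨X, fun i hi => hX ⟨i, hi, rfl⟩⟩
    have h4 := key (max X 1) (by have := le_max_right X 1; linarith)
    have h5 : u ⊆ B (max X 1) := fun i hi => by rw [hB]; exact (hX i hi).trans (le_max_left _ _)
    have h6 : 0 ≤ m * (max X 1) ^ (1 - s) := by
      have : 0 ≤ max X 1 := le_trans zero_le_one (le_max_right _ _)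
      positivity
    have h7 : ∑ i ∈ u, w i * n i ^ (-s) ≤ ∑ i ∈ B (max X 1), w i * n i ^ (-s) := by
      refine Finset.sum_le_sum_of_subset_of_nonneg h5 fun i _ _ => ?_
      have := hw i
      have := hn i
      positivity
    linarith

/-- Abstract system of generalized primes. -/
structure FmSys (P : Type*) where
  N : P → ℝ
  two_le : ∀ p, 2 ≤ N p
  fin : ∀ x : ℝ, {f : P →₀ ℕ | (f.prod fun p k => N p ^ k) ≤ x}.Finite
  finP : ∀ x : ℝ, {p | N p ≤ x}.Finite
  κ : ℝ
  θ : ℝ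
  C : ℝ
  Ch : ℝ
  κ_pos : 0 < κ
  θ_ge : 1 / 2 ≤ θ
  θ_lt : θ < 1
  C_nonneg : 0 ≤ C
  Ch_nonneg : 0 ≤ Ch
  count : ∀ x : ℝ, 1 ≤ x → |((fin x).toFinset.card : ℝ) - κ * x| ≤ C * x ^ θ
  cheb : ∀ x : ℝ, 1 ≤ x → ∑ p ∈ (finP x).toFinset, Real.log (N p) ≤ Ch * x

namespace FmSys
variable {P : Type*} (S : FmSys P)

/-- norm -/
def nrm (f : P →₀ ℕ) : ℝ := f.prod fun p k => S.N p ^ k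

/-- ball -/
def B (x : ℝ) : Finset (P →₀ ℕ) := (S.fin x).toFinset

/-- prime ball -/
def PB (x : ℝ) : Finset P := (S.finP x).toFinset

/-- counting function -/
def I (x : ℝ) : ℝ := ((S.B x).card : ℝ)

lemma mem_B {x : ℝ} {f : P →₀ ℕ} : f ∈ S.B x ↔ S.nrm f ≤ x := by simp [B, nrm]
lemma mem_PB {x : ℝ} {p : P} : p ∈ S.PB x ↔ S.N p ≤ x := by simp [PB]

lemma N_pos (p : P) : 0 < S.N p := by have := S.two_le p; linarith
lemma one_le_N (p : P) : 1 ≤ S.N p := by have := S.two_le p; linarith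
lemma log_N_pos (p : P) : 0 < Real.log (S.N p) := Real.log_pos (by have := S.two_le p; linarith)
lemma log_two_le (p : P) : Real.log 2 ≤ Real.log (S.N p) :=
  Real.log_le_log (by norm_num) (S.two_le p)

lemma nrm_add (f g : P →₀ ℕ) : S.nrm (f + g) = S.nrm f * S.nrm g := by
  classical
  exact Finsupp.prod_add_index' (by simp) (fun p a b => pow_add _ _ _)

lemma nrm_single (p : P) (k : ℕ) : S.nrm (Finsupp.single p k) = S.N p ^ k := by
  simp [nrm]

lemma nrm_smul (k : ℕ) (f : P →₀ ℕ) : S.nrm (k • f) = S.nrm f ^ k := by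
  induction k with
  | zero => simp [nrm]
  | succ k ih => rw [add_smul, one_smul, nrm_add, ih, pow_succ]

lemma one_le_nrm (f : P →₀ ℕ) : 1 ≤ S.nrm f := by
  unfold nrm Finsupp.prod
  have := Finset.prod_le_prod (s := f.support) (f := fun _ => (1:ℝ)) (g := fun p => S.N p ^ f p)
    (by simp) (fun p _ => one_le_pow₀ (S.one_le_N p))
  simpa using this

lemma nrm_pos (f : P →₀ ℕ) : 0 < S.nrm f := lt_of_lt_of_le one_pos (S.one_le_nrm f)

lemma log_nrm (f : P →₀ ℕ) : Real.log (S.nrm f) = ∑ p ∈ f.support, (f p : ℝ) * Real.log (S.N p) := by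
  unfold nrm Finsupp.prod
  rw [Real.log_prod]
  · simp
  · intro p _; exact pow_ne_zero _ (S.N_pos p).ne'

lemma supp_le (f : P →₀ ℕ) : (f.support.card : ℝ) * Real.log 2 ≤ Real.log (S.nrm f) := by
  rw [log_nrm, ← nsmul_eq_mul, ← Finset.sum_const]
  refine Finset.sum_le_sum fun p hp => ?_
  have h1 : (1:ℝ) ≤ f p := by
    rw [Nat.one_le_cast]; exact Nat.one_le_iff_ne_zero.2 (Finsupp.mem_support_iff.1 hp)
  have := S.log_two_le p
  have := S.log_N_pos p
  nlinarith

lemma N_le_nrm {f : P →₀ ℕ} {p : P} (hp : p ∈ f.support) : S.N p ≤ S.nrm f := by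
  have h1 : f = (f - Finsupp.single p 1) + Finsupp.single p 1 := by
    rw [tsub_add_cancel_of_le]
    rw [Finsupp.single_le_iff]
    exact Nat.one_le_iff_ne_zero.2 (Finsupp.mem_support_iff.1 hp)
  rw [h1, nrm_add, nrm_single, pow_one]
  exact le_mul_of_one_le_left (S.N_pos p).le (S.one_le_nrm _)

lemma I_nonneg (x : ℝ) : 0 ≤ S.I x := Nat.cast_nonneg _

lemma I_mono {x y : ℝ} (h : x ≤ y) : S.I x ≤ S.I y := by
  unfold I
  norm_cast
  exact Finset.card_le_card fun f hf => by rw [mem_B] at hf ⊢; linarith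

lemma I_zero {x : ℝ} (h : x < 1) : S.I x = 0 := by
  unfold I
  norm_cast
  rw [Finset.card_eq_zero, Finset.eq_empty_iff_forall_notMem]
  intro f hf
  rw [mem_B] at hf
  have := S.one_le_nrm f
  linarith

lemma I_est {x : ℝ} (h : 1 ≤ x) : |S.I x - S.κ * x| ≤ S.C * x ^ S.θ := S.count x h

lemma I_le {x : ℝ} (h : 0 ≤ x) : S.I x ≤ S.κ * x + S.C * x ^ S.θ := by
  obtain h1 | h1 := lt_or_ge x 1
  · rw [S.I_zero h1]
    have := S.κ_pos
    have := S.C_nonneg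
    positivity
  · have := (abs_le.1 (S.I_est h1)).2
    linarith

lemma I_le' {x : ℝ} (h : 0 ≤ x) : S.I x ≤ (S.κ + S.C) * x := by
  obtain h1 | h1 := lt_or_ge x 1
  · rw [S.I_zero h1]
    have := S.κ_pos
    have := S.C_nonneg
    positivity
  · have := S.I_le h
    have h2 : x ^ S.θ ≤ x := by
      conv_rhs => rw [← Real.rpow_one x]
      exact Real.rpow_le_rpow_of_exponent_le h1 S.θ_lt.le
    nlinarith [S.C_nonneg]

/-- lemma: count of f with `k ≤ f p`. -/
lemma count_ge (x : ℝ) (p : P) (k : ℕ) :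
    (((S.B x).filter fun f => k ≤ f p).card : ℝ) = S.I (x / S.N p ^ k) := by
  unfold I
  norm_cast
  symm
  refine Finset.card_bij (fun f _ => f + Finsupp.single p k) ?_ ?_ ?_
  · intro f hf
    rw [mem_B, le_div_iff₀ (pow_pos (S.N_pos p) k)] at hf
    simp [mem_B, nrm_add, nrm_single, hf]
  · intro f _ g _ h
    exact add_right_cancel h
  · intro g hg
    rw [Finset.mem_filter, mem_B] at hg
    have h1 : g = (g - Finsupp.single p k) + Finsupp.single p k := by
      rw [tsub_add_cancel_of_le]
      rw [Finsupp.single_le_iff]; exact hg.2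
    refine ⟨g - Finsupp.single p k, ?_, h1.symm⟩
    rw [mem_B, le_div_iff₀ (pow_pos (S.N_pos p) k), ← nrm_single, ← nrm_add, ← h1]
    exact hg.1

/-- W -/
def W (y : ℝ) : ℝ := ∑ f ∈ S.B y, (f.support.card : ℝ)

lemma W_eq (y : ℝ) : S.W y = ∑ p ∈ S.PB y, S.I (y / S.N p) := by
  classical
  have h1 : ∀ p, S.I (y / S.N p) = ∑ f ∈ S.B y, if p ∈ f.support then (1:ℝ) else 0 := by
    intro p
    have := S.count_ge y p 1
    rw [pow_one] at this
    rw [← this, Finset.sum_ite, Finset.sum_const_zero, add_zero, Finset.sum_const, nsmul_eq_mul, mul_one]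
    congr 2
    refine Finset.filter_congr fun f _ => ?_
    rw [Finsupp.mem_support_iff, Nat.one_le_iff_ne_zero]
  simp_rw [h1]
  rw [Finset.sum_comm, W]
  refine Finset.sum_congr rfl fun f hf => ?_
  rw [Finset.sum_ite_mem, Finset.sum_const, nsmul_eq_mul, mul_one]
  congr 2
  rw [eq_comm, Finset.inter_eq_right]
  intro p hp
  rw [mem_PB]
  rw [mem_B] at hf
  exact (S.N_le_nrm hp).trans hf

lemma W_nonneg (y : ℝ) : 0 ≤ S.W y := Finset.sum_nonneg fun _ _ => Nat.cast_nonneg _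

lemma W_le {y : ℝ} (hy : 0 < y) (z : ℝ) (hyz : y ≤ z) (hz : 1 ≤ z) :
    S.W y ≤ (S.κ + S.C) * y * (Real.log z / Real.log 2) := by
  have hl := Real.log_pos (one_lt_two)
  calc S.W y ≤ ∑ f ∈ S.B y, Real.log z / Real.log 2 := by
        refine Finset.sum_le_sum fun f hf => ?_
        rw [mem_B] at hf
        rw [le_div_iff₀ hl]
        exact (S.supp_le f).trans (Real.log_le_log (S.nrm_pos f) (hf.trans hyz))
    _ = S.I y * (Real.log z / Real.log 2) := by rw [Finset.sum_const, nsmul_eq_mul, I]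
    _ ≤ _ := mul_le_mul_of_nonneg_right (S.I_le' hy.le) (div_nonneg (Real.log_nonneg hz) hl.le)

lemma W_zero {y : ℝ} (hy : y < 1) : S.W y = 0 := by
  refine Finset.sum_eq_zero fun f hf => ?_
  rw [mem_B] at hf
  have := S.one_le_nrm f
  linarith

end FmSys

end FmA1

section FmA2

lemma fm_geo {r : ℝ} (h0 : 0 ≤ r) (h1 : r < 1) (K : ℕ) :
    ∑ k ∈ Finset.Icc 1 K, r ^ k ≤ r / (1 - r) := by
  have h2 : ∑ k ∈ Finset.Icc 1 K, r ^ k = r * ∑ k ∈ Finset.range K, r ^ k := by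
    induction K with
    | zero => simp
    | succ K ih => rw [Finset.sum_Icc_succ_top (by omega), ih, Finset.sum_range_succ, mul_add, ← pow_succ']
  rw [h2, div_eq_mul_inv]
  refine mul_le_mul_of_nonneg_left ?_ h0
  rw [← tsum_geometric_of_lt_one h0 h1]
  exact (summable_geometric_of_lt_one h0 h1).sum_le_tsum _ fun i _ => pow_nonneg h0 i

namespace FmSys
variable {P : Type*} (S : FmSys P)

lemma powsum_log (s : ℝ) (hs0 : 0 ≤ s) (hs1 : s < 1) :
    ∃ C', 0 ≤ C' ∧ ∀ x, 1 / 2 ≤ x → ∑ p ∈ S.PB x, Real.log (S.N p) * S.N p ^ (-s) ≤ C' * x ^ (1 - s) :=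
  fm_powsum_lt S.N (fun p => Real.log (S.N p)) S.one_le_N (fun p => (S.log_N_pos p).le) S.PB
    (fun _ _ => S.mem_PB) S.Ch S.Ch_nonneg S.cheb s hs0 hs1

lemma summable_log (s : ℝ) (hs1 : 1 < s) :
    Summable fun p => Real.log (S.N p) * S.N p ^ (-s) :=
  fm_powsum_gt S.N (fun p => Real.log (S.N p)) S.one_le_N (fun p => (S.log_N_pos p).le) S.PB
    (fun _ _ => S.mem_PB) S.Ch S.Ch_nonneg S.cheb s hs1

lemma summable_N (s : ℝ) (hs1 : 1 < s) : Summable fun p => S.N p ^ (-s) := by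
  have h := (S.summable_log s hs1).mul_left (Real.log 2)⁻¹
  have hl := Real.log_pos (one_lt_two)
  refine Summable.of_nonneg_of_le (fun p => ?_) (fun p => ?_) h
  · have := S.N_pos p; positivity
  · rw [← mul_assoc]
    refine le_mul_of_one_le_left ?_ ?_
    · have := S.N_pos p; positivity
    · rw [← div_eq_inv_mul, le_div_iff₀ hl, one_mul]; exact S.log_two_le p

/-- T -/
def Tt (x : ℝ) : ℝ := ∑ f ∈ S.B x, Real.log (S.nrm f)

lemma T_est : ∃ C1, 0 ≤ C1 ∧ ∀ x, 1 ≤ x → |S.Tt x - S.κ * x * Real.log x| ≤ C1 * x := by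
  obtain ⟨C', hC'0, hC'⟩ := fm_powsum_lt S.nrm (fun _ => 1) S.one_le_nrm (fun _ => zero_le_one) S.B
    (fun _ _ => S.mem_B) (S.κ + S.C) (by have := S.κ_pos; have := S.C_nonneg; positivity)
    (fun x hx => by
      have := S.I_le' (by linarith : (0:ℝ) ≤ x)
      simpa [I] using this) (1 / 2) (by norm_num) (by norm_num)
  have hθ : 0 < 1 - S.θ := by have := S.θ_lt; linarith
  have hC := S.C_nonneg
  refine ⟨S.C / (1 - S.θ) + 2 * C', by positivity, fun x hx => ?_⟩
  have hx0 : 0 < x := by linarith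
  have h1 : S.Tt x = S.I x * Real.log x - ∑ f ∈ S.B x, Real.log (x / S.nrm f) := by
    rw [I, ← nsmul_eq_mul, ← Finset.sum_const, ← Finset.sum_sub_distrib, Tt]
    refine Finset.sum_congr rfl fun f _ => ?_
    rw [Real.log_div hx0.ne' (S.nrm_pos f).ne']; ring
  have h2 : 0 ≤ ∑ f ∈ S.B x, Real.log (x / S.nrm f) := by
    refine Finset.sum_nonneg fun f hf => Real.log_nonneg ?_
    rw [one_le_div (S.nrm_pos f)]
    exact S.mem_B.1 hf
  have h3 : ∑ f ∈ S.B x, Real.log (x / S.nrm f) ≤ 2 * C' * x := by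
    calc ∑ f ∈ S.B x, Real.log (x / S.nrm f) ≤ ∑ f ∈ S.B x, 2 * x ^ (1/2 : ℝ) * (1 * S.nrm f ^ (-(1/2 : ℝ))) := by
          refine Finset.sum_le_sum fun f hf => ?_
          have hn := S.nrm_pos f
          refine (Real.log_le_rpow_div (by positivity) (by norm_num : (0:ℝ) < 1/2)).trans (le_of_eq ?_)
          rw [Real.div_rpow hx0.le hn.le, Real.rpow_neg hn.le]
          field_simp
      _ = 2 * x ^ (1/2 : ℝ) * ∑ f ∈ S.B x, (1 * S.nrm f ^ (-(1/2 : ℝ))) := by rw [Finset.mul_sum]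
      _ ≤ 2 * x ^ (1/2 : ℝ) * (C' * x ^ (1 - 1/2 : ℝ)) := by
          gcongr; exact hC' x (by linarith)
      _ = 2 * C' * (x ^ (1/2 : ℝ) * x ^ (1 - 1/2 : ℝ)) := by ring
      _ = _ := by rw [← Real.rpow_add hx0]; norm_num
  have h4 : |(S.I x - S.κ * x) * Real.log x| ≤ S.C / (1 - S.θ) * x := by
    have hlog := Real.log_nonneg hx
    rw [abs_mul, abs_of_nonneg hlog]
    calc _ ≤ S.C * x ^ S.θ * (x ^ (1 - S.θ) / (1 - S.θ)) := by
          refine mul_le_mul (S.I_est hx) (Real.log_le_rpow_div hx0.le hθ) hlog (by positivity)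
      _ = S.C / (1 - S.θ) * (x ^ S.θ * x ^ (1 - S.θ)) := by ring
      _ = _ := by rw [← Real.rpow_add hx0]; norm_num
  rw [h1]
  rw [abs_le] at h4 ⊢
  constructor <;> nlinarith [h4.1, h4.2]

lemma J_bound (x : ℝ) (p : P) (hp : S.N p ≤ x) :
    |∑ f ∈ S.B x, (f p : ℝ) - S.κ * x / S.N p| ≤
      2 * S.κ * x * S.N p ^ (-2 : ℝ) + 4 * S.C * x ^ S.θ * S.N p ^ (-S.θ) := by
  classical
  have hN := S.N_pos p
  have hN2 := S.two_le p
  have hx0 : 0 < x := by linarith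
  have hC := S.C_nonneg
  have hκ := S.κ_pos
  have eN2 : S.N p ^ (-2 : ℝ) = 1 / S.N p ^ 2 := by
    rw [Real.rpow_neg hN.le, one_div]; norm_cast
  have hlow : S.I (x / S.N p) ≤ ∑ f ∈ S.B x, (f p : ℝ) := by
    have := S.count_ge x p 1
    rw [pow_one] at this
    rw [← this, Finset.card_filter]
    push_cast
    refine Finset.sum_le_sum fun f _ => ?_
    split_ifs with h
    · exact_mod_cast h
    · exact Nat.cast_nonneg _
  obtain ⟨K, hK⟩ : ∃ K : ℕ, ∀ f ∈ S.B x, f p ≤ K := by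
    obtain ⟨K, hK⟩ := ((S.B x).finite_toSet.image fun f => f p).bddAbove
    exact ⟨K, fun f hf => hK ⟨f, hf, rfl⟩⟩
  have hup : ∑ f ∈ S.B x, (f p : ℝ) = ∑ k ∈ Finset.Icc 1 K, S.I (x / S.N p ^ k) := by
    simp_rw [← S.count_ge, Finset.card_filter]
    push_cast
    rw [Finset.sum_comm]
    refine Finset.sum_congr rfl fun f hf => ?_
    rw [Finset.sum_boole]
    congr 1
    have : Finset.filter (fun k => k ≤ f p) (Finset.Icc 1 K) = Finset.Icc 1 (f p) := by
      have := hK f hf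
      ext k; simp; omega
    rw [this]; simp
  have hr : S.N p ^ (-S.θ) ≤ 3 / 4 := by
    calc S.N p ^ (-S.θ) ≤ 2 ^ (-S.θ) :=
          Real.rpow_le_rpow_of_nonpos (by norm_num) hN2 (by have := S.θ_ge; linarith)
      _ ≤ 2 ^ (-(1/2) : ℝ) := Real.rpow_le_rpow_of_exponent_le (by norm_num) (by have := S.θ_ge; linarith)
      _ ≤ 3 / 4 := by
          rw [Real.rpow_neg (by norm_num), ← Real.sqrt_eq_rpow, inv_le_comm₀ (by positivity) (by norm_num)]
          exact Real.le_sqrt_of_sq_le (by norm_num)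
  have hr0 : 0 ≤ S.N p ^ (-S.θ) := by positivity
  have hupper : ∑ f ∈ S.B x, (f p : ℝ) ≤ S.κ * x / S.N p +
      (2 * S.κ * x * S.N p ^ (-2 : ℝ) + 4 * S.C * x ^ S.θ * S.N p ^ (-S.θ)) := by
    rw [hup]
    calc _ ≤ ∑ k ∈ Finset.Icc 1 K, (S.κ * x * (1 / S.N p) ^ k + S.C * x ^ S.θ * (S.N p ^ (-S.θ)) ^ k) := by
          refine Finset.sum_le_sum fun k _ => ?_
          refine (S.I_le (by positivity)).trans (le_of_eq ?_)
          rw [Real.div_rpow hx0.le (by positivity), ← Real.rpow_natCast, ← Real.rpow_natCast,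
            ← Real.rpow_natCast, ← Real.rpow_mul hN.le, ← Real.rpow_mul hN.le,
            Real.div_rpow zero_le_one hN.le, Real.one_rpow,
            show -S.θ * (k:ℝ) = -(k * S.θ) by ring, Real.rpow_neg hN.le]
          ring
      _ = S.κ * x * ∑ k ∈ Finset.Icc 1 K, (1 / S.N p) ^ k +
          S.C * x ^ S.θ * ∑ k ∈ Finset.Icc 1 K, (S.N p ^ (-S.θ)) ^ k := by
          rw [Finset.sum_add_distrib, Finset.mul_sum, Finset.mul_sum]
      _ ≤ S.κ * x * (1 / S.N p + 2 * (1 / S.N p ^ 2)) +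
          S.C * x ^ S.θ * (4 * S.N p ^ (-S.θ)) := by
          gcongr
          · refine (fm_geo (by positivity) ?_ K).trans ?_
            · rw [div_lt_one hN]; linarith
            · have : 0 < S.N p - 1 := by linarith
              have e : 1 / S.N p / (1 - 1 / S.N p) = 1 / (S.N p - 1) := by field_simp
              rw [e, div_le_iff₀ this]
              field_simp
              nlinarith
          · refine (fm_geo hr0 (by linarith) K).trans ?_
            rw [div_le_iff₀ (by linarith)]
            nlinarith
      _ = _ := by rw [eN2]; ring
  have hlower : S.κ * x / S.N p - S.C * x ^ S.θ * S.N p ^ (-S.θ) ≤ ∑ f ∈ S.B x, (f p : ℝ) := by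
    refine le_trans ?_ hlow
    have := (abs_le.1 (S.I_est (x := x / S.N p) (by rwa [one_le_div hN]))).1
    rw [Real.div_rpow hx0.le hN.le] at this
    rw [Real.rpow_neg hN.le, mul_div_assoc, mul_assoc, ← div_eq_mul_inv]
    linarith
  have p1 : 0 ≤ S.C * x ^ S.θ * S.N p ^ (-S.θ) := by positivity
  have p2 : 0 ≤ 2 * S.κ * x * S.N p ^ (-2 : ℝ) := by positivity
  rw [abs_le]
  constructor <;> linarith

lemma T_eq (x : ℝ) : S.Tt x = ∑ p ∈ S.PB x, Real.log (S.N p) * ∑ f ∈ S.B x, (f p : ℝ) := by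
  simp_rw [Finset.mul_sum]
  rw [Finset.sum_comm, Tt]
  refine Finset.sum_congr rfl fun f hf => ?_
  rw [log_nrm]
  have hsub : f.support ⊆ S.PB x := fun p hp => by
    rw [mem_PB]; exact (S.N_le_nrm hp).trans (S.mem_B.1 hf)
  rw [Finset.sum_subset hsub]
  · exact Finset.sum_congr rfl fun p _ => mul_comm _ _
  · intro p _ hp
    rw [Finsupp.notMem_support_iff.1 hp]; simp

/-- S -/
def Ss (x : ℝ) : ℝ := ∑ p ∈ S.PB x, Real.log (S.N p) / S.N p

lemma mertens1 : ∃ C, 0 ≤ C ∧ ∀ x, 1 ≤ x → |S.Ss x - Real.log x| ≤ C := by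
  obtain ⟨C1, hC10, hC1⟩ := S.T_est
  obtain ⟨C2, hC20, hC2⟩ := S.powsum_log S.θ (by have := S.θ_ge; linarith) S.θ_lt
  have hs := S.summable_log 2 (by norm_num)
  set D := ∑' p, Real.log (S.N p) * S.N p ^ (-2 : ℝ) with hD
  have hD0 : 0 ≤ D := tsum_nonneg fun p => by
    have := S.log_N_pos p; have := S.N_pos p; positivity
  have hκ := S.κ_pos
  have hC := S.C_nonneg
  refine ⟨(C1 + 2 * S.κ * D + 4 * S.C * C2) / S.κ, by positivity, fun x hx => ?_⟩
  have hx0 : 0 < x := by linarith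
  have h1 : |S.Tt x - S.κ * x * S.Ss x| ≤ 2 * S.κ * x * D + 4 * S.C * C2 * x := by
    have e : S.Tt x - S.κ * x * S.Ss x =
        ∑ p ∈ S.PB x, Real.log (S.N p) * (∑ f ∈ S.B x, (f p : ℝ) - S.κ * x / S.N p) := by
      rw [T_eq, Ss, Finset.mul_sum, ← Finset.sum_sub_distrib]
      exact Finset.sum_congr rfl fun p _ => by ring
    rw [e]
    refine (Finset.abs_sum_le_sum_abs _ _).trans ?_
    calc _ ≤ ∑ p ∈ S.PB x, (2 * S.κ * x * (Real.log (S.N p) * S.N p ^ (-2 : ℝ)) +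
            4 * S.C * x ^ S.θ * (Real.log (S.N p) * S.N p ^ (-S.θ))) := by
          refine Finset.sum_le_sum fun p hp => ?_
          rw [abs_mul, abs_of_pos (S.log_N_pos p)]
          refine (mul_le_mul_of_nonneg_left (S.J_bound x p (S.mem_PB.1 hp)) (S.log_N_pos p).le).trans
            (le_of_eq (by ring))
      _ = 2 * S.κ * x * ∑ p ∈ S.PB x, (Real.log (S.N p) * S.N p ^ (-2 : ℝ)) +
            4 * S.C * x ^ S.θ * ∑ p ∈ S.PB x, (Real.log (S.N p) * S.N p ^ (-S.θ)) := by
          rw [Finset.sum_add_distrib, Finset.mul_sum, Finset.mul_sum]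
      _ ≤ 2 * S.κ * x * D + 4 * S.C * x ^ S.θ * (C2 * x ^ (1 - S.θ)) := by
          gcongr
          · exact hs.sum_le_tsum _ fun p _ => by
              have := S.log_N_pos p; have := S.N_pos p; positivity
          · exact hC2 x (by linarith)
      _ = 2 * S.κ * x * D + 4 * S.C * C2 * (x ^ S.θ * x ^ (1 - S.θ)) := by ring
      _ = _ := by rw [← Real.rpow_add hx0]; norm_num
  have h2 := hC1 x hx
  have h3 : |S.κ * x * (S.Ss x - Real.log x)| ≤ (C1 + 2 * S.κ * D + 4 * S.C * C2) * x := by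
    rw [abs_le] at h1 h2 ⊢
    constructor <;> nlinarith [h1.1, h1.2, h2.1, h2.2]
  rw [abs_mul, abs_of_pos (by positivity : 0 < S.κ * x)] at h3
  rw [le_div_iff₀ hκ]
  have : |S.Ss x - Real.log x| * S.κ * x ≤ (C1 + 2 * S.κ * D + 4 * S.C * C2) * x := by linarith
  exact le_of_mul_le_mul_right this hx0

end FmSys

end FmA2

section FmA3

/-- psi -/
def fmpsi (t : ℝ) : ℝ := 1 / (t * Real.log t ^ 2)

lemma fmpsi_cont {a b : ℝ} (ha : 1 < a) (hab : a ≤ b) : ContinuousOn fmpsi (Set.uIcc a b) := by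
  rw [Set.uIcc_of_le hab]
  unfold fmpsi
  refine ContinuousOn.div continuousOn_const (continuousOn_id.mul ((Real.continuousOn_log.mono ?_).pow 2)) ?_
  · intro t ht; have := ht.1; simp; linarith
  · intro t ht
    have h1 : 1 < t := lt_of_lt_of_le ha ht.1
    have := Real.log_pos h1
    have : 0 < t := by linarith
    positivity

lemma fmpsi_int {a b : ℝ} (ha : 1 < a) (hab : a ≤ b) :
    ∫ t in a..b, fmpsi t = 1 / Real.log a - 1 / Real.log b := by
  have : ∀ t ∈ Set.uIcc a b, HasDerivAt (fun t => - (Real.log t)⁻¹) (fmpsi t) t := by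
    intro t ht
    rw [Set.uIcc_of_le hab] at ht
    have h1 : 1 < t := lt_of_lt_of_le ha ht.1
    have hl := Real.log_pos h1
    have h0 : t ≠ 0 := by linarith
    have := ((Real.hasDerivAt_log h0).inv hl.ne').neg
    refine this.congr_deriv ?_
    unfold fmpsi
    field_simp
  rw [intervalIntegral.integral_eq_sub_of_hasDerivAt this (fmpsi_cont ha hab).intervalIntegrable]
  ring

lemma fmpsi_int_log {a b : ℝ} (ha : 1 < a) (hab : a ≤ b) :
    ∫ t in a..b, (Real.log t - Real.log a) * fmpsi t =
      Real.log (Real.log b) - Real.log (Real.log a) - (Real.log b - Real.log a) / Real.log b := by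
  have : ∀ t ∈ Set.uIcc a b, HasDerivAt (fun t => Real.log (Real.log t) + Real.log a * (Real.log t)⁻¹)
      ((Real.log t - Real.log a) * fmpsi t) t := by
    intro t ht
    rw [Set.uIcc_of_le hab] at ht
    have h1 : 1 < t := lt_of_lt_of_le ha ht.1
    have hl := Real.log_pos h1
    have h0 : t ≠ 0 := by linarith
    have := ((Real.hasDerivAt_log h0).log hl.ne').add (((Real.hasDerivAt_log h0).inv hl.ne').const_mul (Real.log a))
    refine this.congr_deriv ?_
    unfold fmpsi
    field_simp
    ring
  have hi : IntervalIntegrable (fun t => (Real.log t - Real.log a) * fmpsi t) MeasureTheory.volume a b := by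
    refine ContinuousOn.intervalIntegrable (ContinuousOn.mul ?_ (fmpsi_cont ha hab))
    refine ContinuousOn.sub (Real.continuousOn_log.mono ?_) continuousOn_const
    rw [Set.uIcc_of_le hab]
    intro t ht; have := ht.1; simp; linarith
  rw [intervalIntegral.integral_eq_sub_of_hasDerivAt this hi]
  have h1 := Real.log_pos ha
  have h2 := Real.log_pos (lt_of_lt_of_le ha hab)
  field_simp
  ring

lemma fmpsi_int_ind {x y n : ℝ} (hx : 1 < x) (hxn : x ≤ n) (hny : n ≤ y) :
    IntervalIntegrable (fun t => (Set.Ici n).indicator fmpsi t) MeasureTheory.volume x y ∧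
    ∫ t in x..y, (Set.Ici n).indicator fmpsi t = 1 / Real.log n - 1 / Real.log y := by
  have hi : IntervalIntegrable (fun t => (Set.Ici n).indicator fmpsi t) MeasureTheory.volume x y := by
    have h0 : IntervalIntegrable fmpsi MeasureTheory.volume x y :=
      (fmpsi_cont hx (hxn.trans hny)).intervalIntegrable
    rw [intervalIntegrable_iff] at h0 ⊢
    exact MeasureTheory.IntegrableOn.indicator h0 measurableSet_Ici
  refine ⟨hi, ?_⟩
  have hm : n ∈ Set.uIcc x y := by rw [Set.uIcc_of_le (hxn.trans hny)]; exact ⟨hxn, hny⟩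
  have h1 : IntervalIntegrable (fun t => (Set.Ici n).indicator fmpsi t) MeasureTheory.volume x n :=
    hi.mono_set (Set.uIcc_subset_uIcc Set.left_mem_uIcc hm)
  have h2 : IntervalIntegrable (fun t => (Set.Ici n).indicator fmpsi t) MeasureTheory.volume n y :=
    hi.mono_set (Set.uIcc_subset_uIcc hm Set.right_mem_uIcc)
  rw [← intervalIntegral.integral_add_adjacent_intervals h1 h2]
  have e1 : ∫ t in x..n, (Set.Ici n).indicator fmpsi t = 0 := by
    rw [intervalIntegral.integral_of_le hxn, MeasureTheory.integral_Ioc_eq_integral_Ioo]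
    rw [MeasureTheory.setIntegral_congr_fun (g := fun _ => (0:ℝ)) measurableSet_Ioo]
    · simp
    · intro t ht
      simp [Set.indicator, ht.2]
  have e2 : ∫ t in n..y, (Set.Ici n).indicator fmpsi t = ∫ t in n..y, fmpsi t := by
    refine intervalIntegral.integral_congr fun t ht => ?_
    rw [Set.uIcc_of_le hny] at ht
    simp [Set.indicator, ht.1]
  rw [e1, e2, fmpsi_int (by linarith) hny, zero_add]

namespace FmSys
variable {P : Type*} (S : FmSys P)

/-- M -/
def Mm (x : ℝ) : ℝ := ∑ p ∈ S.PB x, 1 / S.N p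

lemma PB_sub {x y : ℝ} (h : x ≤ y) : S.PB x ⊆ S.PB y := fun p hp => by
  rw [mem_PB] at hp ⊢; linarith

lemma mertens2_diff (C : ℝ) (hC : ∀ x, 1 ≤ x → |S.Ss x - Real.log x| ≤ C) (x y : ℝ) (hx : 2 ≤ x)
    (hxy : x ≤ y) :
    |S.Mm y - S.Mm x - (Real.log (Real.log y) - Real.log (Real.log x))| ≤ 2 * C / Real.log x := by
  classical
  have hx1 : 1 < x := by linarith
  have hlx := Real.log_pos hx1
  have hly := Real.log_pos (lt_of_lt_of_le hx1 hxy)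
  set Q := S.PB y \ S.PB x with hQ
  have hQm : ∀ p ∈ Q, x ≤ S.N p ∧ S.N p ≤ y := by
    intro p hp
    rw [hQ, Finset.mem_sdiff, mem_PB, mem_PB, not_le] at hp
    exact ⟨hp.2.le, hp.1⟩
  set F : ℝ → ℝ := fun t => ∑ p ∈ Q, Real.log (S.N p) / S.N p * (Set.Ici (S.N p)).indicator fmpsi t with hF
  have hFi : IntervalIntegrable F MeasureTheory.volume x y := by
    have : F = ∑ p ∈ Q, fun t => Real.log (S.N p) / S.N p * (Set.Ici (S.N p)).indicator fmpsi t := by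
      ext t; simp [hF]
    rw [this]
    refine IntervalIntegrable.sum _ fun p hp => ?_
    exact (fmpsi_int_ind hx1 (hQm p hp).1 (hQm p hp).2).1.const_mul _
  have hSsub : S.Ss y - S.Ss x = ∑ p ∈ Q, Real.log (S.N p) / S.N p := by
    rw [Ss, Ss, ← Finset.sum_sdiff (S.PB_sub hxy), add_sub_cancel_right]
  have hM : S.Mm y - S.Mm x = (S.Ss y - S.Ss x) / Real.log y + ∫ t in x..y, F t := by
    have e1 : ∫ t in x..y, F t = ∑ p ∈ Q, Real.log (S.N p) / S.N p * (1 / Real.log (S.N p) - 1 / Real.log y) := by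
      rw [hF, intervalIntegral.integral_finsetSum]
      · refine Finset.sum_congr rfl fun p hp => ?_
        rw [intervalIntegral.integral_const_mul, (fmpsi_int_ind hx1 (hQm p hp).1 (hQm p hp).2).2]
      · intro p hp
        exact (fmpsi_int_ind hx1 (hQm p hp).1 (hQm p hp).2).1.const_mul _
    rw [e1, hSsub, Finset.sum_div, ← Finset.sum_add_distrib, Mm, Mm, ← Finset.sum_sdiff (S.PB_sub hxy),
      add_sub_cancel_right]
    refine Finset.sum_congr rfl fun p _ => ?_
    have := S.N_pos p
    have := S.log_N_pos p
    field_simp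
    ring
  have hFt : ∀ t ∈ Set.Icc x y, F t = (S.Ss t - S.Ss x) * fmpsi t := by
    intro t ht
    have e : S.Ss t - S.Ss x = ∑ p ∈ Q, if S.N p ≤ t then Real.log (S.N p) / S.N p else 0 := by
      rw [Ss, Ss, ← Finset.sum_sdiff (S.PB_sub ht.1), add_sub_cancel_right, ← Finset.sum_filter]
      refine Finset.sum_congr ?_ fun _ _ => rfl
      ext p
      simp only [Finset.mem_sdiff, mem_PB, Finset.mem_filter, hQ]
      constructor
      · rintro ⟨h1, h2⟩; exact ⟨⟨h1.trans ht.2, h2⟩, h1⟩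
      · rintro ⟨⟨_, h2⟩, h1⟩; exact ⟨h1, h2⟩
    rw [e, Finset.sum_mul, hF]
    refine Finset.sum_congr rfl fun p _ => ?_
    by_cases h : S.N p ≤ t <;> simp [Set.indicator, h]
  have hlogi : IntervalIntegrable (fun t => (Real.log t - Real.log x) * fmpsi t) MeasureTheory.volume x y := by
    refine ContinuousOn.intervalIntegrable (ContinuousOn.mul ?_ (fmpsi_cont hx1 hxy))
    refine ContinuousOn.sub (Real.continuousOn_log.mono ?_) continuousOn_const
    rw [Set.uIcc_of_le hxy]
    intro t ht; have := ht.1; simp; linarith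
  have hbd : |∫ t in x..y, (F t - (Real.log t - Real.log x) * fmpsi t)| ≤
      2 * C * (1 / Real.log x - 1 / Real.log y) := by
    rw [← Real.norm_eq_abs, ← fmpsi_int hx1 hxy, ← intervalIntegral.integral_const_mul]
    refine intervalIntegral.norm_integral_le_of_norm_le hxy ?_
      ((fmpsi_cont hx1 hxy).intervalIntegrable.const_mul _)
    refine Filter.Eventually.of_forall fun t ht => ?_
    rw [hFt t ⟨ht.1.le, ht.2⟩, Real.norm_eq_abs, ← sub_mul, abs_mul]
    have h1t : 1 < t := by linarith [ht.1]
    have hp : 0 ≤ fmpsi t := by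
      unfold fmpsi
      have : 0 < t := by linarith
      positivity
    rw [abs_of_nonneg hp]
    refine mul_le_mul_of_nonneg_right ?_ hp
    have h1 := abs_le.1 (hC t h1t.le)
    have h2 := abs_le.1 (hC x hx1.le)
    rw [abs_le]; constructor <;> linarith
  rw [intervalIntegral.integral_sub hFi hlogi, fmpsi_int_log hx1 hxy] at hbd
  have hbd2 : |((S.Ss y - S.Ss x) - (Real.log y - Real.log x)) / Real.log y| ≤ 2 * C * (1 / Real.log y) := by
    rw [abs_div, abs_of_pos hly, mul_one_div]
    refine div_le_div_of_nonneg_right ?_ hly.le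
    have h1 := abs_le.1 (hC y (by linarith))
    have h2 := abs_le.1 (hC x hx1.le)
    rw [abs_le]; constructor <;> linarith
  have hfin := (abs_add_le _ _).trans (add_le_add hbd hbd2)
  rw [hM]
  have e1 : 2 * C / Real.log x = 2 * C * (1 / Real.log x - 1 / Real.log y) + 2 * C * (1 / Real.log y) := by ring
  rw [e1]
  refine le_trans (le_of_eq ?_) hfin
  congr 1
  ring

lemma mertens2 (A : ℝ) (hA : Tendsto (fun x => S.Mm x - Real.log (Real.log x)) atTop (𝓝 A)) :
    ∃ C, 0 ≤ C ∧ ∀ x, 2 ≤ x → |S.Mm x - Real.log (Real.log x) - A| ≤ C / Real.log x := by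
  obtain ⟨C, hC0, hC⟩ := S.mertens1
  refine ⟨2 * C, by positivity, fun x hx => ?_⟩
  have h1 : Tendsto (fun y => |S.Mm x - Real.log (Real.log x) - (S.Mm y - Real.log (Real.log y))|) atTop
      (𝓝 |S.Mm x - Real.log (Real.log x) - A|) := (tendsto_const_nhds.sub hA).abs
  refine le_of_tendsto h1 ?_
  filter_upwards [eventually_ge_atTop x] with y hy
  have := S.mertens2_diff C hC x y hx hy
  rw [← abs_neg]
  refine le_trans (le_of_eq ?_) this
  congr 1; ring

lemma log_le_pow (ε : ℝ) (hε : 0 < ε) (y : ℝ) (hy : 2 ≤ y) : 1 ≤ (1 / ε) * y ^ ε / Real.log y := by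
  have hl := Real.log_pos (by linarith : 1 < y)
  rw [le_div_iff₀ hl, one_mul]
  refine (Real.log_le_rpow_div (by linarith) hε).trans (le_of_eq (by ring))

lemma sum_N_theta : ∃ C, 0 ≤ C ∧ ∀ y, 2 ≤ y →
    ∑ p ∈ S.PB y, S.N p ^ (-S.θ) ≤ C * (y ^ (1 - S.θ) / Real.log y) := by
  classical
  have hθ0 : 0 < 1 - S.θ := by have := S.θ_lt; linarith
  obtain ⟨C1, hC10, hC1⟩ := S.powsum_log S.θ (by have := S.θ_ge; linarith) S.θ_lt
  have hl2 := Real.log_pos one_lt_two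
  refine ⟨2 * C1 + C1 / Real.log 2 * (2 / (1 - S.θ)), by positivity, fun y hy => ?_⟩
  have hy0 : 0 < y := by linarith
  have hly := Real.log_pos (by linarith : 1 < y)
  have hsq : 1 ≤ √y := Real.one_le_sqrt.2 (by linarith)
  have hsy : √y ≤ y := by
    rw [Real.sqrt_le_left (by linarith)]; nlinarith
  rw [← Finset.sum_sdiff (S.PB_sub hsy)]
  have h1 : ∑ p ∈ S.PB y \ S.PB √y, S.N p ^ (-S.θ) ≤ 2 * C1 * (y ^ (1 - S.θ) / Real.log y) := by
    calc _ ≤ ∑ p ∈ S.PB y \ S.PB √y, (2 / Real.log y) * (Real.log (S.N p) * S.N p ^ (-S.θ)) := by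
          refine Finset.sum_le_sum fun p hp => ?_
          rw [Finset.mem_sdiff, mem_PB, mem_PB, not_le] at hp
          have hN := S.N_pos p
          rw [← mul_assoc]
          refine le_mul_of_one_le_left (by positivity) ?_
          have : Real.log √y ≤ Real.log (S.N p) := Real.log_le_log (by linarith) hp.2.le
          rw [Real.log_sqrt hy0.le] at this
          rw [div_mul_eq_mul_div, le_div_iff₀ hly]; linarith
      _ ≤ ∑ p ∈ S.PB y, (2 / Real.log y) * (Real.log (S.N p) * S.N p ^ (-S.θ)) := by
          refine Finset.sum_le_sum_of_subset_of_nonneg Finset.sdiff_subset fun p _ _ => ?_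
          have := S.log_N_pos p; have := S.N_pos p; positivity
      _ = (2 / Real.log y) * ∑ p ∈ S.PB y, (Real.log (S.N p) * S.N p ^ (-S.θ)) := by rw [Finset.mul_sum]
      _ ≤ (2 / Real.log y) * (C1 * y ^ (1 - S.θ)) := by gcongr; exact hC1 y (by linarith)
      _ = _ := by ring
  have h2 : ∑ p ∈ S.PB √y, S.N p ^ (-S.θ) ≤ C1 / Real.log 2 * (2 / (1 - S.θ)) * (y ^ (1 - S.θ) / Real.log y) := by
    calc _ ≤ ∑ p ∈ S.PB √y, (1 / Real.log 2) * (Real.log (S.N p) * S.N p ^ (-S.θ)) := by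
          refine Finset.sum_le_sum fun p hp => ?_
          have hN := S.N_pos p
          rw [← mul_assoc]
          refine le_mul_of_one_le_left (by positivity) ?_
          rw [div_mul_eq_mul_div, le_div_iff₀ hl2]; linarith [S.log_two_le p]
      _ = (1 / Real.log 2) * ∑ p ∈ S.PB √y, (Real.log (S.N p) * S.N p ^ (-S.θ)) := by rw [Finset.mul_sum]
      _ ≤ (1 / Real.log 2) * (C1 * √y ^ (1 - S.θ)) := by gcongr; exact hC1 _ (by linarith)
      _ = C1 / Real.log 2 * (y ^ ((1 - S.θ) / 2) * 1) := by
          rw [Real.sqrt_eq_rpow, ← Real.rpow_mul hy0.le, mul_one,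
            show 1 / 2 * (1 - S.θ) = (1 - S.θ) / 2 by ring]; ring
      _ ≤ C1 / Real.log 2 * (y ^ ((1 - S.θ) / 2) * ((1 / ((1 - S.θ) / 2)) * y ^ ((1 - S.θ) / 2) / Real.log y)) := by
          gcongr; exact log_le_pow _ (by positivity) y hy
      _ = C1 / Real.log 2 * (2 / (1 - S.θ)) * ((y ^ ((1 - S.θ) / 2) * y ^ ((1 - S.θ) / 2)) / Real.log y) := by
          rw [one_div_div]; ring
      _ = _ := by rw [← Real.rpow_add hy0, add_halves]
  linarith

lemma W_est (A : ℝ) (hA : Tendsto (fun x => S.Mm x - Real.log (Real.log x)) atTop (𝓝 A)) :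
    ∃ C, 0 ≤ C ∧ ∀ y, 2 ≤ y → |S.W y - S.κ * y * (Real.log (Real.log y) + A)| ≤ C * (y / Real.log y) := by
  obtain ⟨C1, hC10, hC1⟩ := S.mertens2 A hA
  obtain ⟨C2, hC20, hC2⟩ := S.sum_N_theta
  have hκ := S.κ_pos
  have hC := S.C_nonneg
  refine ⟨S.κ * C1 + S.C * C2, by positivity, fun y hy => ?_⟩
  have hy0 : 0 < y := by linarith
  have hly := Real.log_pos (by linarith : 1 < y)
  have h1 : |S.W y - S.κ * y * S.Mm y| ≤ S.C * C2 * (y / Real.log y) := by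
    rw [W_eq, Mm, Finset.mul_sum, ← Finset.sum_sub_distrib]
    refine (Finset.abs_sum_le_sum_abs _ _).trans ?_
    calc _ ≤ ∑ p ∈ S.PB y, S.C * y ^ S.θ * S.N p ^ (-S.θ) := by
          refine Finset.sum_le_sum fun p hp => ?_
          have hN := S.N_pos p
          have := S.I_est (x := y / S.N p) (by rw [one_le_div hN]; exact S.mem_PB.1 hp)
          rw [Real.div_rpow hy0.le hN.le] at this
          rw [Real.rpow_neg hN.le, ← div_eq_mul_inv, mul_div_assoc S.C]
          refine le_trans (le_of_eq ?_) this
          congr 1; ring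
      _ = S.C * y ^ S.θ * ∑ p ∈ S.PB y, S.N p ^ (-S.θ) := by rw [Finset.mul_sum]
      _ ≤ S.C * y ^ S.θ * (C2 * (y ^ (1 - S.θ) / Real.log y)) := by gcongr; exact hC2 y hy
      _ = S.C * C2 * ((y ^ S.θ * y ^ (1 - S.θ)) / Real.log y) := by ring
      _ = _ := by rw [← Real.rpow_add hy0]; norm_num
  have h2 : |S.κ * y * (S.Mm y - Real.log (Real.log y) - A)| ≤ S.κ * C1 * (y / Real.log y) := by
    rw [abs_mul, abs_of_pos (by positivity)]
    refine (mul_le_mul_of_nonneg_left (hC1 y hy) (by positivity)).trans (le_of_eq (by ring))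
  have := (abs_add_le _ _).trans (add_le_add h1 h2)
  rw [show S.W y - S.κ * y * (Real.log (Real.log y) + A) = S.W y - S.κ * y * S.Mm y +
    S.κ * y * (S.Mm y - Real.log (Real.log y) - A) by ring]
  linarith

end FmSys

end FmA3

section FmA4

/-- admissible exponents -/
def fmAdm {P : Type*} (t : Finset ℕ) (b : P →₀ ℕ) : Prop := ∀ p ∈ b.support, b p ∈ t

lemma fm_euler_fin {P : Type*} [DecidableEq P] (t : Finset ℕ) (ht : 0 ∉ t) (u : P → ℕ → ℝ) (hu0 : ∀ p, u p 0 = 1)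
    (s : Finset P) :
    ∑ b ∈ s.finsupp (fun _ => insert 0 t), b.prod u = ∏ p ∈ s, (1 + ∑ k ∈ t, u p k) := by
  have h1 : ∀ p, 1 + ∑ k ∈ t, u p k = ∑ k ∈ insert 0 t, u p k := fun p => by
    rw [Finset.sum_insert ht, hu0]
  simp_rw [h1]
  rw [Finset.prod_sum]
  rw [Finset.finsupp, Finset.sum_map]
  refine Finset.sum_congr (by congr!) fun f hf => ?_
  rw [Finsupp.prod_of_support_subset _ (s := s)]
  · rw [← Finset.prod_attach]
    refine Finset.prod_congr rfl fun p _ => ?_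
    simp [Finsupp.indicator]
  · exact Finsupp.support_indicator_subset s f
  · intro p _; exact hu0 p

lemma fm_euler {P : Type*} (t : Finset ℕ) (ht : 0 ∉ t) (u : P → ℕ → ℝ) (hu0 : ∀ p, u p 0 = 1)
    (hu : ∀ p k, 0 ≤ u p k) (hs : Summable fun p => ∑ k ∈ t, u p k) :
    HasSum (fun b : {b : P →₀ ℕ // fmAdm t b} => b.1.prod u) (∏' p, (1 + ∑ k ∈ t, u p k)) := by
  classical
  set Fs : Finset P → Finset {b : P →₀ ℕ // fmAdm t b} :=
    fun s => (s.finsupp (fun _ => insert 0 t)).subtype _ with hFs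
  have hmem : ∀ s (b : {b : P →₀ ℕ // fmAdm t b}), b ∈ Fs s ↔ b.1.support ⊆ s := by
    intro s b
    simp only [hFs, Finset.mem_subtype]
    rw [Finset.mem_finsupp_iff]
    constructor
    · exact fun h => h.1
    · refine fun h => ⟨h, fun p hp => ?_⟩
      by_cases hb : p ∈ b.1.support
      · exact Finset.mem_insert_of_mem (b.2 p hb)
      · rw [Finsupp.notMem_support_iff.1 hb]; exact Finset.mem_insert_self _ _
  have hsum : ∀ s, ∑ b ∈ Fs s, b.1.prod u = ∏ p ∈ s, (1 + ∑ k ∈ t, u p k) := by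
    intro s
    rw [← fm_euler_fin t ht u hu0 s, hFs]
    refine Finset.sum_subtype_of_mem (fun b : P →₀ ℕ => b.prod u) ?_
    intro b hb p hp
    rw [Finset.mem_finsupp_iff] at hb
    have := hb.2 p (hb.1 hp)
    rw [Finset.mem_insert] at this
    exact this.resolve_left (Finsupp.mem_support_iff.1 hp)
  have hnn : ∀ b : {b : P →₀ ℕ // fmAdm t b}, 0 ≤ b.1.prod u := fun b =>
    Finset.prod_nonneg fun p _ => hu _ _
  have hSn : ∀ p, 0 ≤ ∑ k ∈ t, u p k := fun p => Finset.sum_nonneg fun k _ => hu p k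
  have hmul : Multipliable fun p => 1 + ∑ k ∈ t, u p k :=
    Real.multipliable_one_add_of_summable hs
  have hsumm : Summable fun b : {b : P →₀ ℕ // fmAdm t b} => b.1.prod u := by
    refine summable_of_sum_le (c := Real.exp (∑' p, ∑ k ∈ t, u p k)) hnn ?_
    intro v
    have hv : v ⊆ Fs (v.biUnion fun b => b.1.support) := by
      intro b hb
      rw [hmem]
      exact Finset.subset_biUnion_of_mem (fun b : {b : P →₀ ℕ // fmAdm t b} => b.1.support) hb
    refine (Finset.sum_le_sum_of_subset_of_nonneg hv fun b _ _ => hnn b).trans ?_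
    rw [hsum]
    calc _ ≤ ∏ p ∈ v.biUnion fun b => b.1.support, Real.exp (∑ k ∈ t, u p k) := by
          refine Finset.prod_le_prod (fun p _ => by have := hSn p; linarith) fun p _ => ?_
          rw [add_comm]; exact Real.add_one_le_exp _
      _ = Real.exp (∑ p ∈ v.biUnion fun b => b.1.support, ∑ k ∈ t, u p k) := by rw [Real.exp_sum]
      _ ≤ _ := Real.exp_le_exp.2 (hs.sum_le_tsum _ fun p _ => hSn p)
  have htend : Tendsto Fs atTop atTop := by
    refine tendsto_atTop_finset_of_monotone ?_ ?_
    · intro s s' h b hb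
      rw [hmem] at hb ⊢
      exact hb.trans h
    · intro b
      exact ⟨b.1.support, (hmem _ _).2 subset_rfl⟩
  have h1 : Tendsto (fun s => ∑ b ∈ Fs s, b.1.prod u) atTop (𝓝 (∑' b : {b : P →₀ ℕ // fmAdm t b}, b.1.prod u)) := by
    have h0 : Tendsto (fun v : Finset {b : P →₀ ℕ // fmAdm t b} => ∑ b ∈ v, b.1.prod u) atTop
      (𝓝 (∑' b : {b : P →₀ ℕ // fmAdm t b}, b.1.prod u)) := hsumm.hasSum
    exact h0.comp htend
  have h2 : Tendsto (fun s => ∑ b ∈ Fs s, b.1.prod u) atTop (𝓝 (∏' p, (1 + ∑ k ∈ t, u p k))) := by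
    simp_rw [hsum]
    exact hmul.hasProd
  rw [← tendsto_nhds_unique h1 h2]
  exact hsumm.hasSum

lemma fm_bdecomp {h a b : ℕ} (hh : 2 ≤ h) (hb : b = 0 ∨ b ∈ Finset.Ioo h (2 * h)) :
    b = if (h * a + b) % h = 0 then 0 else h + (h * a + b) % h := by
  rw [Nat.mul_add_mod]
  obtain rfl | hb := hb
  · simp
  · rw [Finset.mem_Ioo] at hb
    have : b % h = b - h := by
      rw [Nat.mod_eq_sub_mod (by omega), Nat.mod_eq_of_lt (by omega)]
    rw [this, if_neg (by omega)]
    omega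

lemma fm_bdecomp2 {h m : ℕ} (hh : 2 ≤ h) (hm : m = 0 ∨ h ≤ m) :
    ∃ a b, m = h * a + b ∧ (b = 0 ∨ b ∈ Finset.Ioo h (2 * h)) := by
  obtain rfl | hm := hm
  · exact ⟨0, 0, by simp, Or.inl rfl⟩
  have h1 := Nat.div_add_mod m h
  have h2 := Nat.mod_lt m (by omega : h > 0)
  by_cases h0 : m % h = 0
  · exact ⟨m / h, 0, by omega, Or.inl rfl⟩
  · have h3 : 1 ≤ m / h := (Nat.one_le_div_iff (by omega)).2 hm
    refine ⟨m / h - 1, h + m % h, ?_, Or.inr ?_⟩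
    · obtain ⟨q, hq⟩ : ∃ q, m / h = q + 1 := ⟨m / h - 1, by omega⟩
      rw [hq] at h1 ⊢
      rw [mul_add] at h1
      simp only [Nat.add_sub_cancel]
      omega
    · rw [Finset.mem_Ioo]; omega

namespace FmSys
variable {P : Type*} (S : FmSys P)

/-- inner sum -/
def V (b : P →₀ ℕ) (y : ℝ) : ℝ := S.W y + ∑ p ∈ b.support, (S.I y - S.I (y / S.N p))

open Classical in
/-- the sum over h-full elements -/
def HF (h : ℕ) (x : ℝ) : ℝ :=
  ∑ m ∈ (S.B x).filter (fun m => ∀ p ∈ m.support, h ≤ m p), (m.support.card : ℝ)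

lemma V_eq (h : ℕ) (hh : 2 ≤ h) (b : P →₀ ℕ) (y : ℝ) :
    ∑ a ∈ S.B y, ((h • a + b).support.card : ℝ) = S.V b y := by
  classical
  have h1 : ∀ a : P →₀ ℕ, ((h • a + b).support.card : ℝ) =
      (a.support.card : ℝ) + ∑ p ∈ b.support, if 1 ≤ a p then (0:ℝ) else 1 := by
    intro a
    have e1 : (h • a + b).support = a.support ∪ (b.support \ a.support) := by
      ext p
      simp only [Finsupp.mem_support_iff, Finsupp.add_apply, Finsupp.smul_apply, smul_eq_mul,
        Finset.mem_union, Finset.mem_sdiff, not_not, ne_eq, Nat.add_eq_zero_iff, mul_eq_zero]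
      have : h ≠ 0 := by omega
      tauto
    rw [e1, Finset.card_union_of_disjoint Finset.disjoint_sdiff]
    push_cast
    congr 1
    have e2 : b.support \ a.support = b.support.filter fun p => ¬ 1 ≤ a p := by
      ext p; simp [Finset.mem_sdiff]
    rw [e2, Finset.card_filter]
    push_cast
    exact Finset.sum_congr rfl fun p _ => by split_ifs <;> simp_all
  simp_rw [h1]
  rw [Finset.sum_add_distrib, V, W, Finset.sum_comm]
  congr 1
  refine Finset.sum_congr rfl fun p _ => ?_
  have := S.count_ge y p 1
  rw [pow_one] at this
  rw [← this, I, ← Finset.card_filter_add_card_filter_not (s := S.B y) (fun f => 1 ≤ f p)]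
  push_cast
  rw [add_sub_cancel_left, Finset.card_filter]
  push_cast
  exact Finset.sum_congr rfl fun p _ => by split_ifs <;> simp_all

lemma V_zero (b : P →₀ ℕ) {y : ℝ} (hy0 : 0 < y) (hy : y < 1) : S.V b y = 0 := by
  rw [V, S.W_zero hy, zero_add]
  refine Finset.sum_eq_zero fun p _ => ?_
  rw [S.I_zero hy, S.I_zero, sub_zero]
  refine lt_of_le_of_lt ?_ hy
  exact div_le_self hy0.le (S.one_le_N p)

/-- y_b -/
def yb (h : ℕ) (x : ℝ) (b : P →₀ ℕ) : ℝ := (x / S.nrm b) ^ (1 / (h : ℝ))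

lemma le_yb {h : ℕ} (hh : 2 ≤ h) {x : ℝ} (hx : 0 < x) (a b : P →₀ ℕ) :
    S.nrm a ≤ S.yb h x b ↔ S.nrm (h • a + b) ≤ x := by
  have hb := S.nrm_pos b
  have ha := S.nrm_pos a
  rw [yb, one_div, Real.le_rpow_inv_iff_of_pos ha.le (by positivity) (by positivity), nrm_add, nrm_smul,
    Real.rpow_natCast, le_div_iff₀ hb]

lemma HF_eq (h : ℕ) (hh : 2 ≤ h) (x : ℝ) (hx : 0 < x) :
    S.HF h x = ∑' b : {b : P →₀ ℕ // fmAdm (Finset.Ioo h (2 * h)) b}, S.V b.1 (S.yb h x b.1) := by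
  classical
  have h1 : S.HF h x = ∑ b ∈ (S.B x).filter (fmAdm (Finset.Ioo h (2 * h))), S.V b (S.yb h x b) := by
    simp_rw [← S.V_eq h hh]
    rw [Finset.sum_sigma', HF]
    symm
    refine Finset.sum_bij (fun c _ => h • c.2 + c.1) ?_ ?_ ?_ ?_
    · rintro ⟨b, a⟩ hba
      simp only [Finset.mem_sigma, Finset.mem_filter, mem_B] at hba ⊢
      obtain ⟨⟨_, hb⟩, ha⟩ := hba
      rw [S.le_yb hh hx] at ha
      refine ⟨ha, fun p hp => ?_⟩
      simp only [Finsupp.mem_support_iff, Finsupp.add_apply, Finsupp.smul_apply, smul_eq_mul] at hp ⊢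
      by_cases hbp : b p = 0
      · rw [hbp, add_zero] at hp ⊢
        have : a p ≠ 0 := right_ne_zero_of_mul hp
        exact Nat.le_mul_of_pos_right h (Nat.pos_of_ne_zero this)
      · have := hb p (Finsupp.mem_support_iff.2 hbp)
        rw [Finset.mem_Ioo] at this
        omega
    · rintro ⟨b, a⟩ hba ⟨b', a'⟩ hba' heq
      simp only [Finset.mem_sigma, Finset.mem_filter, mem_B] at hba hba' heq
      have hz : ∀ (c : P →₀ ℕ), fmAdm (Finset.Ioo h (2 * h)) c → ∀ p, c p = 0 ∨ c p ∈ Finset.Ioo h (2 * h) := by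
        intro c hc p
        by_cases hcp : c p = 0
        · exact Or.inl hcp
        · exact Or.inr (hc p (Finsupp.mem_support_iff.2 hcp))
      have hbb : b = b' := by
        ext p
        have e := DFunLike.congr_fun heq p
        simp only [Finsupp.add_apply, Finsupp.smul_apply, smul_eq_mul] at e
        rw [fm_bdecomp (a := a p) hh (hz b hba.1.2 p), fm_bdecomp (a := a' p) hh (hz b' hba'.1.2 p), e]
      subst hbb
      have haa : a = a' := by
        ext p
        have e := DFunLike.congr_fun (add_right_cancel heq) p
        simp only [Finsupp.smul_apply, smul_eq_mul] at e
        exact Nat.eq_of_mul_eq_mul_left (by omega) e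
      rw [haa]
    · intro m hm
      simp only [Finset.mem_filter, mem_B] at hm
      have hex : ∀ p, ∃ ab : ℕ × ℕ, m p = h * ab.1 + ab.2 ∧ (ab.2 = 0 ∨ ab.2 ∈ Finset.Ioo h (2 * h)) := by
        intro p
        obtain ⟨a, b, h1⟩ := fm_bdecomp2 hh (m := m p) (by
          by_cases hmp : m p = 0
          · exact Or.inl hmp
          · exact Or.inr (hm.2 p (Finsupp.mem_support_iff.2 hmp)))
        exact ⟨(a, b), h1⟩
      choose g hg1 hg2 using hex
      let a : P →₀ ℕ := Finsupp.onFinset m.support (fun p => (g p).1) (fun p hp => by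
        rw [Finsupp.mem_support_iff, hg1 p]
        have := Nat.mul_ne_zero (by omega : h ≠ 0) hp
        omega)
      let b : P →₀ ℕ := Finsupp.onFinset m.support (fun p => (g p).2) (fun p hp => by
        rw [Finsupp.mem_support_iff, hg1 p]
        omega)
      have hmab : h • a + b = m := by
        ext p
        simp only [Finsupp.add_apply, Finsupp.smul_apply, smul_eq_mul]
        exact (hg1 p).symm
      refine ⟨⟨b, a⟩, ?_, hmab⟩
      simp only [Finset.mem_sigma, Finset.mem_filter, mem_B]
      refine ⟨⟨?_, ?_⟩, ?_⟩
      · have := hm.1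
        rw [← hmab, nrm_add] at this
        refine le_trans ?_ this
        exact le_mul_of_one_le_left (S.nrm_pos b).le (S.one_le_nrm _)
      · intro p hp
        exact (hg2 p).resolve_left (Finsupp.mem_support_iff.1 hp)
      · rw [S.le_yb hh hx, hmab]; exact hm.1
    · intro c _; rfl
  rw [h1, tsum_eq_sum (s := (S.B x).subtype (fmAdm (Finset.Ioo h (2 * h))))]
  · rw [Finset.sum_subtype_eq_sum_filter (f := fun b => S.V b (S.yb h x b))]
  · intro b hb
    rw [Finset.mem_subtype, mem_B, not_le] at hb
    have hbp := S.nrm_pos b.1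
    have : x / S.nrm b.1 < 1 := (div_lt_one hbp).2 hb
    have hh0 : 0 < 1 / (h : ℝ) := by positivity
    refine S.V_zero _ ?_ ?_
    · unfold yb; positivity
    · exact Real.rpow_lt_one (by positivity) this hh0

end FmSys

end FmA4

section FmA5

namespace FmSys
variable {P : Type*} (S : FmSys P)

/-- c_b -/
def cb (b : P →₀ ℕ) : ℝ := ∑ p ∈ b.support, (1 - 1 / S.N p)

lemma cb_nonneg (b : P →₀ ℕ) : 0 ≤ S.cb b := by
  refine Finset.sum_nonneg fun p _ => ?_
  have := S.one_le_N p
  have : 1 / S.N p ≤ 1 := (div_le_one (by linarith)).2 this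
  linarith

lemma supp_le2 (b : P →₀ ℕ) : (b.support.card : ℝ) ≤ 2 * Real.log (S.nrm b) := by
  have h1 := S.supp_le b
  have h2 := Real.log_two_gt_d9
  have h3 : (0:ℝ) ≤ b.support.card := Nat.cast_nonneg _
  nlinarith

lemma cb_le (b : P →₀ ℕ) : S.cb b ≤ 2 * Real.log (S.nrm b) := by
  refine le_trans ?_ (S.supp_le2 b)
  unfold cb
  calc _ ≤ ∑ p ∈ b.support, (1:ℝ) := by
        refine Finset.sum_le_sum fun p _ => ?_
        have := S.N_pos p
        have : 0 < 1 / S.N p := by positivity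
        linarith
    _ = _ := by simp

lemma I_est' {u : ℝ} (hu : 0 < u) : |S.I u - S.κ * u| ≤ (S.κ + S.C) * u ^ S.θ := by
  have hκ := S.κ_pos
  have hC := S.C_nonneg
  have hp : 0 < u ^ S.θ := by positivity
  obtain h1 | h1 := lt_or_ge u 1
  · rw [S.I_zero h1, zero_sub, abs_neg, abs_of_pos (by positivity)]
    have : u ≤ u ^ S.θ := by
      conv_lhs => rw [← Real.rpow_one u]
      exact Real.rpow_le_rpow_of_exponent_ge hu h1.le S.θ_lt.le
    nlinarith
  · have := S.I_est h1
    nlinarith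

set_option maxHeartbeats 2000000 in
lemma V_est (h : ℕ) (hh : 2 ≤ h) (A : ℝ)
    (hA : Tendsto (fun x => S.Mm x - Real.log (Real.log x)) atTop (𝓝 A)) :
    ∃ C, 0 ≤ C ∧ ∀ x : ℝ, 4 ^ h ≤ x → ∀ b : P →₀ ℕ,
      |S.V b (S.yb h x b) - S.κ * S.yb h x b * (Real.log (Real.log x) - Real.log h + A + S.cb b)| ≤
        C * (S.yb h x b / Real.log x) * (1 + Real.log (S.nrm b)) ^ 2 := by
  obtain ⟨Cw, hCw0, hCw⟩ := S.W_est A hA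
  have hκ := S.κ_pos
  have hC := S.C_nonneg
  set C3 := S.κ + S.C with hC3
  have hC30 : 0 < C3 := by positivity
  have hθ : 0 < 1 - S.θ := by have := S.θ_lt; linarith
  have hhr : (2:ℝ) ≤ h := by exact_mod_cast hh
  have hh0 : (0:ℝ) < h := by linarith
  have hlh : 0 ≤ Real.log h := Real.log_nonneg (by linarith)
  set K1 := 2 * h * Cw + 2 * S.κ + 8 * h * C3 / (1 - S.θ) with hK1
  set K2 := 6 * C3 + 4 * S.κ + S.κ * (Real.log h + |A|) with hK2
  have hK10 : 0 ≤ K1 := by positivity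
  have hK20 : 0 ≤ K2 := by positivity
  refine ⟨K1 + 2 * K2, by positivity, fun x hx b => ?_⟩
  have h16 : (16:ℝ) ≤ x := by
    refine le_trans ?_ hx
    calc (16:ℝ) = 4 ^ 2 := by norm_num
      _ ≤ 4 ^ h := pow_le_pow_right₀ (by norm_num) hh
  have hx0 : 0 < x := by linarith
  set Z := S.nrm b with hZ
  have hZ1 : 1 ≤ Z := S.one_le_nrm b
  have hZ0 : 0 < Z := S.nrm_pos b
  set y := S.yb h x b with hy
  have hy0 : 0 < y := by rw [hy, yb]; positivity
  set l := Real.log x with hl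
  set a := Real.log Z with ha
  have ha0 : 0 ≤ a := Real.log_nonneg hZ1
  have hl1 : 1 ≤ l := by
    have h1 : Real.log 16 ≤ l := Real.log_le_log (by norm_num) h16
    have h2 : Real.log 16 = 4 * Real.log 2 := by
      rw [show (16:ℝ) = 2 ^ (4:ℕ) by norm_num, Real.log_pow]; norm_num
    have := Real.log_two_gt_d9
    linarith
  have hl0 : 0 < l := by linarith
  have hlogy : Real.log y = (l - a) / h := by
    rw [hy, yb, Real.log_rpow (by positivity), Real.log_div hx0.ne' hZ0.ne']
    ring
  have hyl : 0 < y / l := by positivity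
  obtain hcase | hcase := le_total a (l / 2)
  · -- main case
    have hly : l / (2 * h) ≤ Real.log y := by
      rw [hlogy, div_le_div_iff₀ (by positivity) hh0]
      nlinarith
    have hly0 : 0 < Real.log y := lt_of_lt_of_le (by positivity) hly
    have hy2 : 2 ≤ y := by
      have h1 : (h : ℝ) * Real.log 4 ≤ l := by
        rw [← Real.log_pow]; exact Real.log_le_log (by positivity) hx
      have h2 : Real.log 4 = 2 * Real.log 2 := by
        rw [show (4:ℝ) = 2 ^ (2:ℕ) by norm_num, Real.log_pow]; norm_num
      have h3 : Real.log 2 ≤ Real.log y := by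
        refine le_trans ?_ hly
        rw [le_div_iff₀ (by positivity)]
        rw [h2] at h1; linarith
      exact (Real.log_le_log_iff (by norm_num) hy0).1 h3
    have hylog : y / Real.log y ≤ 2 * h * (y / l) := by
      rw [div_le_iff₀ hly0]
      have : 2 * h * (y / l) * (l / (2 * h)) ≤ 2 * h * (y / l) * Real.log y := by gcongr
      refine le_trans (le_of_eq ?_) this
      field_simp
    have hW := (hCw y hy2).trans (mul_le_mul_of_nonneg_left hylog hCw0)
    have hLL : |Real.log (Real.log y) - (Real.log l - Real.log h)| ≤ 2 * a / l := by
      set u := a / l with hu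
      have hu0 : 0 ≤ u := by positivity
      have hu1 : u ≤ 1 / 2 := by rw [hu, div_le_iff₀ hl0]; linarith
      have e : Real.log (Real.log y) - (Real.log l - Real.log h) = Real.log (1 - u) := by
        have : Real.log y = l * (1 - u) / h := by
          rw [hlogy, hu]; field_simp
        rw [this, Real.log_div (by nlinarith [mul_pos hl0 (by linarith : 0 < 1 - u)]) hh0.ne', Real.log_mul hl0.ne' (by linarith)]
        ring
      rw [e]
      have h1 : Real.log (1 - u) ≤ 0 := Real.log_nonpos (by linarith) (by linarith)
      rw [abs_of_nonpos h1]
      have h2 := Real.one_sub_inv_le_log_of_pos (by linarith : 0 < 1 - u)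
      have h3 : (1 - u)⁻¹ ≤ 1 + 2 * u := by
        rw [inv_le_iff_one_le_mul₀ (by linarith)]
        nlinarith
      have : 2 * a / l = 2 * u := by rw [hu]; ring
      linarith
    have hI : |∑ p ∈ b.support, (S.I y - S.I (y / S.N p)) - S.κ * y * S.cb b| ≤
        8 * h * C3 / (1 - S.θ) * (y / l) * a := by
      rw [cb, Finset.mul_sum, ← Finset.sum_sub_distrib]
      refine (Finset.abs_sum_le_sum_abs _ _).trans ?_
      calc _ ≤ ∑ p ∈ b.support, 2 * C3 * y ^ S.θ := by
            refine Finset.sum_le_sum fun p _ => ?_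
            have hN := S.N_pos p
            have h1 := S.I_est' hy0
            have h2 := S.I_est' (u := y / S.N p) (by positivity)
            have h3 : (y / S.N p) ^ S.θ ≤ y ^ S.θ := by
              refine Real.rpow_le_rpow (by positivity) (div_le_self hy0.le (S.one_le_N p)) ?_
              have := S.θ_ge; linarith
            have h4 : C3 * (y / S.N p) ^ S.θ ≤ C3 * y ^ S.θ := by gcongr
            rw [show S.I y - S.I (y / S.N p) - S.κ * y * (1 - 1 / S.N p) =
              (S.I y - S.κ * y) - (S.I (y / S.N p) - S.κ * (y / S.N p)) by ring]
            refine (abs_sub _ _).trans ?_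
            linarith
        _ = b.support.card * (2 * C3 * y ^ S.θ) := by rw [Finset.sum_const, nsmul_eq_mul]
        _ ≤ (2 * a) * (2 * C3 * (1 / (1 - S.θ) * (2 * h * (y / l)))) := by
            gcongr
            · exact S.supp_le2 b
            · have h1 := log_le_pow (1 - S.θ) hθ y hy2
              calc y ^ S.θ = y ^ S.θ * 1 := by ring
                _ ≤ y ^ S.θ * (1 / (1 - S.θ) * y ^ (1 - S.θ) / Real.log y) := by gcongr
                _ = 1 / (1 - S.θ) * ((y ^ S.θ * y ^ (1 - S.θ)) / Real.log y) := by ring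
                _ = 1 / (1 - S.θ) * (y / Real.log y) := by
                    rw [← Real.rpow_add hy0]; norm_num
                _ ≤ _ := by gcongr
        _ = _ := by ring
    have hL2 : |S.κ * y * (Real.log (Real.log y) - (Real.log l - Real.log h))| ≤ 2 * S.κ * (y / l) * a := by
      rw [abs_mul, abs_of_pos (by positivity : 0 < S.κ * y)]
      refine (mul_le_mul_of_nonneg_left hLL (by positivity)).trans (le_of_eq (by ring))
    have htot := (abs_add_three _ _ _).trans (add_le_add (add_le_add hW hL2) hI)
    have e : S.V b y - S.κ * y * (Real.log l - Real.log h + A + S.cb b) =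
      S.W y - S.κ * y * (Real.log (Real.log y) + A) +
      S.κ * y * (Real.log (Real.log y) - (Real.log l - Real.log h)) +
      (∑ p ∈ b.support, (S.I y - S.I (y / S.N p)) - S.κ * y * S.cb b) := by rw [V]; ring
    rw [e]
    refine htot.trans ?_
    have p1 : 0 ≤ 2 * h * Cw := by positivity
    have p3 : 0 ≤ 8 * h * C3 / (1 - S.θ) := by positivity
    calc _ = (2 * h * Cw + 2 * S.κ * a + 8 * h * C3 / (1 - S.θ) * a) * (y / l) := by ring
      _ ≤ (K1 * (1 + a) ^ 2) * (y / l) := by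
          gcongr
          rw [hK1]
          have q1 : 1 ≤ (1 + a) ^ 2 := by nlinarith
          have q2 : a ≤ (1 + a) ^ 2 := by nlinarith
          have r1 := mul_le_mul_of_nonneg_left q1 p1
          have r2 := mul_le_mul_of_nonneg_left q2 (by positivity : 0 ≤ 2 * S.κ)
          have r3 := mul_le_mul_of_nonneg_left q2 p3
          linarith
      _ ≤ ((K1 + 2 * K2) * (1 + a) ^ 2) * (y / l) := by gcongr; linarith
      _ = _ := by ring
  · -- tail case
    have hla : l ≤ 2 * a := by linarith
    have hyx : y ≤ x := by
      have h1 : x / Z ≤ x := div_le_self hx0.le hZ1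
      have h2 : (x / Z) ^ (1 / (h:ℝ)) ≤ x ^ (1 / (h:ℝ)) := Real.rpow_le_rpow (by positivity) h1 (by positivity)
      refine h2.trans ?_
      conv_rhs => rw [← Real.rpow_one x]
      exact Real.rpow_le_rpow_of_exponent_le (by linarith) (by rw [div_le_one hh0]; linarith)
    have hW := S.W_le hy0 x hyx (by linarith)
    have hW2 : S.W y ≤ C3 * y * (2 * l) := by
      refine hW.trans ?_
      have : l / Real.log 2 ≤ 2 * l := by
        rw [div_le_iff₀ (Real.log_pos one_lt_two)]
        nlinarith [Real.log_two_gt_d9]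
      gcongr
    have hIs : ∑ p ∈ b.support, (S.I y - S.I (y / S.N p)) ≤ 2 * a * (C3 * y) := by
      calc _ ≤ ∑ p ∈ b.support, C3 * y := by
            refine Finset.sum_le_sum fun p _ => ?_
            have := S.I_le' hy0.le
            have := S.I_nonneg (y / S.N p)
            linarith
        _ = b.support.card * (C3 * y) := by rw [Finset.sum_const, nsmul_eq_mul]
        _ ≤ _ := by gcongr; exact S.supp_le2 b
    have hIs0 : 0 ≤ ∑ p ∈ b.support, (S.I y - S.I (y / S.N p)) := by
      refine Finset.sum_nonneg fun p _ => ?_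
      have := S.I_mono (div_le_self hy0.le (S.one_le_N p))
      linarith
    have hV0 : 0 ≤ S.V b y := by rw [V]; have := S.W_nonneg y; linarith
    have hVle : S.V b y ≤ 6 * C3 * y * a := by
      rw [V]
      have : C3 * y * (2 * l) ≤ C3 * y * (2 * (2 * a)) := by gcongr
      linarith
    have hm : |Real.log l - Real.log h + A + S.cb b| ≤ 4 * a + (Real.log h + |A|) := by
      have h1 : 0 ≤ Real.log l := Real.log_nonneg hl1
      have h2 : Real.log l ≤ l := (Real.log_le_sub_one_of_pos hl0).trans (by linarith)
      have h3 := S.cb_nonneg b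
      have h4 := S.cb_le b
      have h5 := neg_abs_le A
      have h6 := le_abs_self A
      rw [abs_le]
      constructor <;> linarith
    have hmain : |S.κ * y * (Real.log l - Real.log h + A + S.cb b)| ≤ S.κ * y * (4 * a + (Real.log h + |A|)) := by
      rw [abs_mul, abs_of_pos (by positivity : 0 < S.κ * y)]
      gcongr
    refine (abs_sub _ _).trans ?_
    rw [abs_of_nonneg hV0]
    have hA0 := abs_nonneg A
    calc _ ≤ 6 * C3 * y * a + S.κ * y * (4 * a + (Real.log h + |A|)) := add_le_add hVle hmain
      _ ≤ K2 * (1 + a) * y * 1 := by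
          have : K2 * (1 + a) * y * 1 - (6 * C3 * y * a + S.κ * y * (4 * a + (Real.log h + |A|))) =
            (6 * C3 + 4 * S.κ + S.κ * (Real.log h + |A|) * a) * y := by rw [hK2]; ring
          have : 0 ≤ (6 * C3 + 4 * S.κ + S.κ * (Real.log h + |A|) * a) * y := by positivity
          linarith
      _ ≤ K2 * (1 + a) * y * (2 * a / l) := by
          gcongr; rwa [one_le_div hl0]
      _ = 2 * K2 * (y / l) * (a * (1 + a)) := by ring
      _ ≤ (K1 + 2 * K2) * (y / l) * (1 + a) ^ 2 := by
          gcongr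
          · linarith
          · nlinarith

end FmSys

end FmA5

section FmA6

namespace FmSys
variable {P : Type*} (S : FmSys P)

lemma nrm_prod_rpow (s : ℝ) (b : P →₀ ℕ) :
    b.prod (fun p k => S.N p ^ (-(s * (k:ℝ)))) = S.nrm b ^ (-s) := by
  rw [nrm, Finsupp.prod, Finsupp.prod, ← Real.finsetProd_rpow _ _ (fun p _ => pow_nonneg (S.N_pos p).le _)]
  refine Finset.prod_congr rfl fun p _ => ?_
  rw [← Real.rpow_natCast, ← Real.rpow_mul (S.N_pos p).le]
  congr 1; ring

/-- local sums -/
def Sp (h : ℕ) (s : ℝ) (p : P) : ℝ := ∑ k ∈ Finset.Ioo h (2 * h), S.N p ^ (-(s * (k:ℝ)))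

lemma Sp_nonneg (h : ℕ) (s : ℝ) (p : P) : 0 ≤ S.Sp h s p :=
  Finset.sum_nonneg fun k _ => Real.rpow_nonneg (S.N_pos p).le _

lemma Sp_summable (h : ℕ) (s : ℝ) (hs0 : 0 < s) (hs : 1 < s * (h + 1)) : Summable (S.Sp h s) := by
  unfold Sp
  refine summable_sum fun k hk => ?_
  rw [Finset.mem_Ioo] at hk
  refine S.summable_N (s * k) (lt_of_lt_of_le hs ?_)
  have : (h:ℝ) + 1 ≤ k := by exact_mod_cast hk.1
  gcongr

lemma hasSum_nrm (h : ℕ) (s : ℝ) (hs0 : 0 < s) (hs : 1 < s * (h + 1)) :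
    HasSum (fun b : {b : P →₀ ℕ // fmAdm (Finset.Ioo h (2 * h)) b} => S.nrm b.1 ^ (-s))
      (∏' p, (1 + S.Sp h s p)) := by
  have := fm_euler (Finset.Ioo h (2 * h)) (by simp) (fun p k => S.N p ^ (-(s * (k:ℝ))))
    (fun p => by simp) (fun p k => Real.rpow_nonneg (S.N_pos p).le _) (S.Sp_summable h s hs0 hs)
  simp_rw [S.nrm_prod_rpow] at this
  exact this

open Classical in
lemma hasSum_nrm_p (h : ℕ) (s : ℝ) (hs0 : 0 < s) (hs : 1 < s * (h + 1)) (q : P) :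
    HasSum (fun b : {b : P →₀ ℕ // fmAdm (Finset.Ioo h (2 * h)) b} =>
      if q ∈ b.1.support then S.nrm b.1 ^ (-s) else 0)
      ((∏' p, (1 + S.Sp h s p)) * (S.Sp h s q / (1 + S.Sp h s q))) := by
  set G := ∏' p, (1 + S.Sp h s p) with hG
  set t := Finset.Ioo h (2 * h) with ht
  set u' : P → ℕ → ℝ := fun p k => if p = q ∧ k ≠ 0 then 0 else S.N p ^ (-(s * (k:ℝ))) with hu'
  have hsum : ∀ p, ∑ k ∈ t, u' p k = if p = q then 0 else S.Sp h s p := by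
    intro p
    split_ifs with hp
    · refine Finset.sum_eq_zero fun k hk => ?_
      rw [ht, Finset.mem_Ioo] at hk
      simp only [hu']; rw [if_pos ⟨hp, by omega⟩]
    · unfold Sp; simp only [hu', hp, false_and, if_false]; rfl
  have hSs := S.Sp_summable h s hs0 hs
  have hSs' : Summable fun p => ∑ k ∈ t, u' p k := by
    refine Summable.of_nonneg_of_le ?_ ?_ hSs
    · intro p; rw [hsum]; split_ifs; exacts [le_rfl, S.Sp_nonneg h s p]
    · intro p; rw [hsum]; split_ifs; exacts [S.Sp_nonneg h s p, le_rfl]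
  have h1 := fm_euler t (by simp [ht]) u' (fun p => by simp [hu'])
    (fun p k => by
      simp only [hu']; split_ifs; exacts [le_rfl, Real.rpow_nonneg (S.N_pos p).le _]) hSs'
  set G' := ∏' p, (1 + ∑ k ∈ t, u' p k) with hG'
  have hpos : 0 < 1 + S.Sp h s q := by have := S.Sp_nonneg h s q; linarith
  have hGG : G = G' * (1 + S.Sp h s q) := by
    have m1 : Multipliable fun p => 1 + ∑ k ∈ t, u' p k :=
      Real.multipliable_one_add_of_summable hSs'
    have m2 := hasProd_ite_eq q (1 + S.Sp h s q)
    have := (m1.hasProd.mul m2).tprod_eq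
    rw [← this, hG]
    refine tprod_congr fun p => ?_
    rw [hsum]
    by_cases hp : p = q
    · subst hp; simp
    · simp [hp]
  have h0 := S.hasSum_nrm h s hs0 hs
  have h2 := h0.sub h1
  have e : G - G' = G * (S.Sp h s q / (1 + S.Sp h s q)) := by
    rw [hGG]; field_simp; ring
  rw [← hG, e] at h2
  suffices hfun : (fun b : {b : P →₀ ℕ // fmAdm (Finset.Ioo h (2 * h)) b} =>
      if q ∈ b.1.support then S.nrm b.1 ^ (-s) else 0) = fun b => S.nrm b.1 ^ (-s) - b.1.prod u' by
    rw [hfun]; exact h2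
  funext b
  have hb0 : ∀ p k, k ≠ 0 → p ≠ q → u' p k = S.N p ^ (-(s * (k:ℝ))) := by
    intro p k _ hp; simp only [hu']; rw [if_neg (by tauto)]
  split_ifs with hq
  · have : b.1.prod u' = 0 := by
      refine Finset.prod_eq_zero hq ?_
      simp only [hu']; rw [if_pos ⟨trivial, Finsupp.mem_support_iff.1 hq⟩]
    rw [this, sub_zero]
  · have : b.1.prod u' = S.nrm b.1 ^ (-s) := by
      rw [← S.nrm_prod_rpow]
      refine Finset.prod_congr rfl fun p hp => ?_
      simp only [hu']; rw [if_neg]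
      rintro ⟨rfl, _⟩; exact hq hp
    rw [this, sub_self]

lemma Sp_eq (h : ℕ) (hh : 2 ≤ h) (p : P) : S.Sp h (1 / (h:ℝ)) p =
    (S.N p - S.N p ^ (1 / (h:ℝ))) / (S.N p ^ 2 * (S.N p ^ (1 / (h:ℝ)) - 1)) := by
  have hN := S.N_pos p
  have h2 := S.two_le p
  have hh0 : (0:ℝ) < h := by positivity
  set q := S.N p ^ (1 / (h:ℝ)) with hq
  have hq1 : 1 < q := Real.one_lt_rpow (by linarith) (by positivity)
  have hqh : q ^ h = S.N p := by
    rw [hq, ← Real.rpow_natCast, ← Real.rpow_mul hN.le, one_div_mul_cancel hh0.ne', Real.rpow_one]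
  have hq0 : 0 < q := by linarith
  have e : ∀ k : ℕ, S.N p ^ (-(1 / (h:ℝ) * (k:ℝ))) = (q ^ k)⁻¹ := by
    intro k
    rw [Real.rpow_neg hN.le, Real.rpow_mul hN.le, Real.rpow_natCast]
  unfold Sp
  simp_rw [e]
  rw [← hqh]
  have hI : Finset.Ioo h (2 * h) = Finset.Ico (h + 1) (2 * h) := by ext; simp [Nat.succ_le_iff]
  rw [hI, Finset.sum_Ico_eq_sum_range]
  obtain ⟨m, rfl⟩ : ∃ m, h = m + 1 := ⟨h - 1, by omega⟩
  rw [show 2 * (m + 1) - (m + 1 + 1) = m by omega]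
  have hq1' : q - 1 ≠ 0 := by linarith
  clear_value q
  clear hqh hI hq e hh
  induction m with
  | zero => simp
  | succ m ih => 
    have e1 : ∑ x ∈ Finset.range (m + 1), (q ^ (m + 1 + 1 + 1 + x))⁻¹ = 
      q⁻¹ * (∑ x ∈ Finset.range m, (q ^ (m + 1 + 1 + x))⁻¹ + (q ^ (m + 1 + 1 + m))⁻¹) := by
      rw [← Finset.sum_range_succ (fun x => (q ^ (m + 1 + 1 + x))⁻¹), Finset.mul_sum]
      refine Finset.sum_congr rfl fun x _ => ?_
      rw [← mul_inv]; congr 1; ring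
    rw [e1, ih (by positivity)]
    field_simp
    ring

end FmSys

end FmA6

section FmA7

namespace FmSys
variable {P : Type*} (S : FmSys P)

/-- local Euler factor constants -/
def Gam (h : ℕ) : ℝ := ∏' p : P, (1 + (S.N p - S.N p ^ (1 / (h:ℝ))) / (S.N p ^ 2 * (S.N p ^ (1 / (h:ℝ)) - 1)))

/-- L series -/
def Lh (h : ℕ) (r : ℝ) : ℝ :=
  ∑' p : P, 1 / (S.N p ^ (r / (h:ℝ) - 1) * (S.N p - S.N p ^ (1 - 1 / (h:ℝ)) + 1))

lemma Gam_eq (h : ℕ) (hh : 2 ≤ h) : S.Gam h = ∏' p, (1 + S.Sp h (1 / (h:ℝ)) p) := by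
  unfold Gam
  exact tprod_congr fun p => by rw [S.Sp_eq h hh]

lemma hsum_cond (h : ℕ) (hh : 2 ≤ h) : 0 < 1 / (h:ℝ) ∧ 1 < 1 / (h:ℝ) * (h + 1) := by
  have hh0 : (0:ℝ) < h := by positivity
  refine ⟨by positivity, ?_⟩
  rw [one_div_mul_eq_div, lt_div_iff₀ hh0]; linarith

lemma Dp_pos (h : ℕ) (hh : 2 ≤ h) (p : P) : 1 ≤ S.N p - S.N p ^ (1 - 1 / (h:ℝ)) + 1 := by
  have h2 := S.two_le p
  have : S.N p ^ (1 - 1 / (h:ℝ)) ≤ S.N p ^ (1:ℝ) :=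
    Real.rpow_le_rpow_of_exponent_le (by linarith) (by have := (hsum_cond h hh).1; linarith)
  rw [Real.rpow_one] at this
  linarith

lemma Dp_ge (h : ℕ) (hh : 2 ≤ h) : ∃ c > 0, ∀ p, c * S.N p ≤ S.N p - S.N p ^ (1 - 1 / (h:ℝ)) + 1 := by
  have hc := (hsum_cond h hh).1
  have h21 : (2:ℝ) ^ (-(1 / (h:ℝ))) < 1 := Real.rpow_lt_one_of_one_lt_of_neg (by norm_num) (by linarith)
  refine ⟨1 - 2 ^ (-(1 / (h:ℝ))), by linarith, fun p => ?_⟩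
  have hN := S.N_pos p
  have h1 : S.N p ^ (-(1 / (h:ℝ))) ≤ 2 ^ (-(1 / (h:ℝ))) :=
    Real.rpow_le_rpow_of_nonpos (by norm_num) (S.two_le p) (by linarith)
  have h2 : S.N p ^ (1 - 1 / (h:ℝ)) = S.N p * S.N p ^ (-(1 / (h:ℝ))) := by
    rw [sub_eq_add_neg, Real.rpow_add hN, Real.rpow_one]
  rw [h2]
  nlinarith

lemma Lh_summable (h : ℕ) (hh : 2 ≤ h) (r : ℝ) (hr : h < r) :
    Summable fun p : P => 1 / (S.N p ^ (r / (h:ℝ) - 1) * (S.N p - S.N p ^ (1 - 1 / (h:ℝ)) + 1)) := by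
  obtain ⟨c, hc, hD⟩ := S.Dp_ge h hh
  have hh0 : (0:ℝ) < h := by positivity
  have h1 : 1 < r / h := by rw [lt_div_iff₀ hh0]; linarith
  refine Summable.of_nonneg_of_le ?_ ?_ ((S.summable_N (r / h) h1).mul_left (1 / c))
  · intro p
    have := S.Dp_pos h hh p
    have := S.N_pos p
    positivity
  · intro p
    have hN := S.N_pos p
    calc _ ≤ 1 / (S.N p ^ (r / (h:ℝ) - 1) * (c * S.N p)) := by
          gcongr
          exact hD p
      _ = 1 / c * (S.N p ^ (r / (h:ℝ) - 1) * S.N p ^ (1:ℝ))⁻¹ := by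
          rw [Real.rpow_one]; field_simp
      _ = _ := by
          rw [← Real.rpow_add hN, Real.rpow_neg hN.le]; ring_nf

lemma local_id (h : ℕ) (hh : 2 ≤ h) (p : P) :
    (1 - 1 / S.N p) * (S.Sp h (1 / (h:ℝ)) p / (1 + S.Sp h (1 / (h:ℝ)) p)) =
    1 / (S.N p ^ (((h:ℝ) + 1) / (h:ℝ) - 1) * (S.N p - S.N p ^ (1 - 1 / (h:ℝ)) + 1)) -
    1 / (S.N p ^ ((2 * (h:ℝ)) / (h:ℝ) - 1) * (S.N p - S.N p ^ (1 - 1 / (h:ℝ)) + 1)) := by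
  have hh0 : (0:ℝ) < h := by positivity
  have hN := S.N_pos p
  have hN2 := S.two_le p
  have e1 : ((h:ℝ) + 1) / (h:ℝ) - 1 = 1 / h := by field_simp; ring
  have e2 : (2 * (h:ℝ)) / (h:ℝ) - 1 = 1 := by field_simp; ring
  have e3 : S.N p ^ (1 - 1 / (h:ℝ)) = S.N p / S.N p ^ (1 / (h:ℝ)) := by
    rw [Real.rpow_sub hN, Real.rpow_one]
  have hD := S.Dp_pos h hh p
  rw [e1, e2, Real.rpow_one, S.Sp_eq h hh]
  rw [e3] at hD ⊢
  set q := S.N p ^ (1 / (h:ℝ)) with hq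
  have hq1 : 1 < q := Real.one_lt_rpow (by linarith) (by positivity)
  have hq1' : q - 1 ≠ 0 := by linarith
  have hqN : q ≤ S.N p := by
    conv_rhs => rw [← Real.rpow_one (S.N p)]
    refine Real.rpow_le_rpow_of_exponent_le (by linarith) ?_
    rw [div_le_one hh0]; have : (2:ℝ) ≤ h := by exact_mod_cast hh
    linarith
  generalize S.N p = N at *
  clear_value q
  have hN1 : N - 1 ≠ 0 := by linarith
  have hE : q * N - N + q ≠ 0 := by nlinarith
  have hS : (N - q) / (N ^ 2 * (q - 1)) / (1 + (N - q) / (N ^ 2 * (q - 1))) =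
      (N - q) / ((N - 1) * (q * N - N + q)) := by
    have : 1 + (N - q) / (N ^ 2 * (q - 1)) = ((N - 1) * (q * N - N + q)) / (N ^ 2 * (q - 1)) := by
      field_simp; ring
    rw [this, div_div_div_cancel_right₀ (by positivity)]
  have hDD : N - N / q + 1 = (q * N - N + q) / q := by field_simp
  rw [hS, hDD]
  field_simp

open Classical in
lemma Gc_eq (h : ℕ) (hh : 2 ≤ h) :
    HasSum (fun b : {b : P →₀ ℕ // fmAdm (Finset.Ioo h (2 * h)) b} =>
      S.cb b.1 * S.nrm b.1 ^ (-(1 / (h:ℝ))))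
      (S.Gam h * (S.Lh h ((h:ℝ) + 1) - S.Lh h (2 * (h:ℝ)))) := by
  obtain ⟨hs0, hs⟩ := hsum_cond h hh
  set F : P × {b : P →₀ ℕ // fmAdm (Finset.Ioo h (2 * h)) b} → ℝ :=
    fun pb => (1 - 1 / S.N pb.1) * (if pb.1 ∈ pb.2.1.support then S.nrm pb.2.1 ^ (-(1 / (h:ℝ))) else 0) with hF
  have hn : ∀ p, 0 ≤ 1 - 1 / S.N p := fun p => by
    have := S.one_le_N p
    have : 1 / S.N p ≤ 1 := (div_le_one (by linarith)).2 this
    linarith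
  have hF0 : 0 ≤ F := by
    intro pb
    refine mul_nonneg (hn _) ?_
    split_ifs
    · exact Real.rpow_nonneg (S.nrm_pos _).le _
    · exact le_rfl
  have hrow : ∀ p, HasSum (fun b => F (p, b)) (S.Gam h * (1 / (S.N p ^ (((h:ℝ) + 1) / (h:ℝ) - 1) * (S.N p - S.N p ^ (1 - 1 / (h:ℝ)) + 1)) -
    1 / (S.N p ^ ((2 * (h:ℝ)) / (h:ℝ) - 1) * (S.N p - S.N p ^ (1 - 1 / (h:ℝ)) + 1)))) := by
    intro p
    have h1 := (S.hasSum_nrm_p h _ hs0 hs p).mul_left (1 - 1 / S.N p)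
    rw [← S.Gam_eq h hh, mul_left_comm, S.local_id h hh] at h1
    exact h1
  have hL1 := S.Lh_summable h hh ((h:ℝ) + 1) (by linarith)
  have hL2 := S.Lh_summable h hh (2 * (h:ℝ)) (by have : (0:ℝ) < h := by positivity
                                                 linarith)
  have hcol := (hL1.hasSum.sub hL2.hasSum).mul_left (S.Gam h)
  have hFs : Summable F := by
    rw [summable_prod_of_nonneg hF0]
    refine ⟨fun p => (hrow p).summable, ?_⟩
    simp_rw [fun p => (hrow p).tsum_eq]
    exact hcol.summable
  have hFt := hFs.hasSum
  have e1 : ∑' pb, F pb = S.Gam h * (S.Lh h ((h:ℝ) + 1) - S.Lh h (2 * (h:ℝ))) := by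
    rw [hFs.tsum_prod]
    simp_rw [fun p => (hrow p).tsum_eq]
    exact hcol.tsum_eq
  rw [e1] at hFt
  have hsw := (Equiv.prodComm {b : P →₀ ℕ // fmAdm (Finset.Ioo h (2 * h)) b} P).hasSum_iff.2 hFt
  refine hsw.prod_fiberwise fun b => ?_
  have : S.cb b.1 * S.nrm b.1 ^ (-(1 / (h:ℝ))) = ∑ p ∈ b.1.support, F (p, b) := by
    rw [cb, Finset.sum_mul]
    refine Finset.sum_congr rfl fun p hp => ?_
    simp only [hF]; rw [if_pos hp]
  rw [this]
  refine hasSum_sum_of_ne_finset_zero fun p hp => ?_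
  simp only [hF, Function.comp, Equiv.prodComm_apply, Prod.swap]
  rw [if_neg hp, mul_zero]

lemma weight_summable (h : ℕ) (hh : 2 ≤ h) :
    Summable (fun b : {b : P →₀ ℕ // fmAdm (Finset.Ioo h (2 * h)) b} =>
      S.nrm b.1 ^ (-(1 / (h:ℝ))) * (1 + Real.log (S.nrm b.1)) ^ 2) := by
  have hh0 : (0:ℝ) < h := by positivity
  set ε : ℝ := 1 / (4 * h * (h + 1)) with hε
  have hε0 : 0 < ε := by positivity
  set s := 1 / (h:ℝ) - 2 * ε with hs
  have hse : s = (2 * h + 1) / (2 * h * (h + 1)) := by rw [hs, hε]; field_simp; ring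
  have hs0 : 0 < s := by rw [hse]; positivity
  have hs1 : 1 < s * (h + 1) := by
    have : s * (h + 1) = 1 + 1 / (2 * h) := by rw [hse]; field_simp
    rw [this]
    have : 0 < 1 / (2 * (h:ℝ)) := by positivity
    linarith
  refine Summable.of_nonneg_of_le ?_ ?_ ((S.hasSum_nrm h s hs0 hs1).summable.mul_left ((1 + 1 / ε) ^ 2))
  · intro b
    have := S.nrm_pos b.1
    positivity
  · intro b
    have hZ := S.nrm_pos b.1
    have hZ1 := S.one_le_nrm b.1
    generalize S.nrm b.1 = Z at *
    have hl0 := Real.log_nonneg hZ1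
    have h1 : 1 + Real.log Z ≤ (1 + 1 / ε) * Z ^ ε := by
      have h2 := Real.log_le_rpow_div hZ.le hε0
      have h3 := Real.one_le_rpow hZ1 hε0.le
      have : (1 + 1 / ε) * Z ^ ε = Z ^ ε + Z ^ ε / ε := by ring
      linarith
    calc _ ≤ Z ^ (-(1 / (h:ℝ))) * ((1 + 1 / ε) * Z ^ ε) ^ 2 := by gcongr
      _ = (1 + 1 / ε) ^ 2 * (Z ^ (-(1 / (h:ℝ))) * (Z ^ ε * Z ^ ε)) := by ring
      _ = _ := by
        rw [← Real.rpow_add hZ, ← Real.rpow_add hZ, hs]; congr 2; ring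

theorem hfull_main (h : ℕ) (hh : 2 ≤ h) (A : ℝ)
    (hA : Tendsto (fun x => S.Mm x - Real.log (Real.log x)) atTop (𝓝 A)) :
    ∃ C, ∀ x : ℝ, 4 ^ h ≤ x →
      |S.HF h x - S.κ * S.Gam h * (x ^ (1 / (h:ℝ)) * Real.log (Real.log x))
        - S.κ * S.Gam h * (A - Real.log h + S.Lh h ((h:ℝ) + 1) - S.Lh h (2 * (h:ℝ))) * x ^ (1 / (h:ℝ))|
        ≤ C * (x ^ (1 / (h:ℝ)) / Real.log x) := by
  obtain ⟨C, hC0, hC⟩ := S.V_est h hh A hA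
  obtain ⟨hs0, hs⟩ := hsum_cond h hh
  have hG := S.hasSum_nrm h _ hs0 hs
  rw [← S.Gam_eq h hh] at hG
  have hGc := S.Gc_eq h hh
  have hW := (S.weight_summable h hh).hasSum
  refine ⟨C * ∑' b : {b : P →₀ ℕ // fmAdm (Finset.Ioo h (2 * h)) b},
    S.nrm b.1 ^ (-(1 / (h:ℝ))) * (1 + Real.log (S.nrm b.1)) ^ 2, fun x hx => ?_⟩
  have hx0 : 0 < x := lt_of_lt_of_le (by positivity) hx
  set X := x ^ (1 / (h:ℝ)) with hX
  have hyb : ∀ b, S.yb h x b = X * S.nrm b ^ (-(1 / (h:ℝ))) := by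
    intro b
    rw [yb, Real.div_rpow hx0.le (S.nrm_pos b).le, Real.rpow_neg (S.nrm_pos b).le, div_eq_mul_inv]
  set M := Real.log (Real.log x) - Real.log h + A with hM
  have hmain := ((hG.mul_left (S.κ * X * M)).add (hGc.mul_left (S.κ * X)))
  have hbd := hW.mul_left (C * (X / Real.log x))
  have hle : ∀ b : {b : P →₀ ℕ // fmAdm (Finset.Ioo h (2 * h)) b},
      ‖S.V b.1 (S.yb h x b.1) - (S.κ * X * M * S.nrm b.1 ^ (-(1 / (h:ℝ))) +
        S.κ * X * (S.cb b.1 * S.nrm b.1 ^ (-(1 / (h:ℝ)))))‖ ≤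
      C * (X / Real.log x) * (S.nrm b.1 ^ (-(1 / (h:ℝ))) * (1 + Real.log (S.nrm b.1)) ^ 2) := by
    intro b
    have := hC x hx b.1
    rw [Real.norm_eq_abs]
    rw [hyb] at this ⊢
    convert this using 1
    · congr 1; rw [hM]; ring
    · ring
  have hes := Summable.of_norm_bounded hbd.summable hle
  have hVs : Summable fun b : {b : P →₀ ℕ // fmAdm (Finset.Ioo h (2 * h)) b} => S.V b.1 (S.yb h x b.1) := by
    have := hes.add hmain.summable
    refine this.congr fun b => ?_
    ring
  have htot := tsum_of_norm_bounded hbd hle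
  rw [hVs.tsum_sub hmain.summable, hmain.tsum_eq, ← S.HF_eq h hh x hx0, Real.norm_eq_abs] at htot
  convert htot using 1
  · congr 1; rw [hM]; ring
  · ring

end FmSys

end FmA7

section FmConcrete
variable (K : Type*) [Field K] [NumberField K]

/-- nonzero primes -/
abbrev FmP : Type _ := {p : Ideal (𝓞 K) // p.IsPrime ∧ p ≠ ⊥}

variable {K}

lemma FmP.prime (p : FmP K) : Prime p.1 := Ideal.prime_of_isPrime p.2.2 p.2.1

/-- ideal from exponents -/
def fmToI (f : FmP K →₀ ℕ) : Ideal (𝓞 K) := f.prod fun p k => p.1 ^ k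

lemma fmToI_ne (f : FmP K →₀ ℕ) : fmToI f ≠ ⊥ := by
  exact Finset.prod_ne_zero_iff.2 fun p _ => pow_ne_zero _ p.prime.ne_zero

lemma fmToI_mult (f : FmP K →₀ ℕ) (p : FmP K) : emultiplicity p.1 (fmToI f) = f p := by
  classical
  rw [fmToI, Finsupp.prod, Finset.emultiplicity_prod p.prime]
  have h1 : ∀ q : FmP K, emultiplicity p.1 (q.1 ^ f q) = if q = p then (f p : ℕ∞) else 0 := by
    intro q
    split_ifs with hq
    · subst hq
      exact emultiplicity_pow_self q.prime.ne_zero q.prime.not_isUnit _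
    · rw [emultiplicity_eq_zero]
      intro hd
      have h2 := p.prime.dvd_of_dvd_pow hd
      have h3 := (p.prime.dvd_prime_iff_associated q.prime).1 h2
      exact hq (Subtype.ext (associated_iff_eq.1 h3).symm)
  simp_rw [h1]
  rw [Finset.sum_ite_eq']
  split_ifs with hp
  · rfl
  · rw [Finsupp.notMem_support_iff.1 hp]; rfl

lemma fmToI_dvd (f : FmP K →₀ ℕ) (p : FmP K) (k : ℕ) : p.1 ^ k ∣ fmToI f ↔ k ≤ f p := by
  rw [pow_dvd_iff_le_emultiplicity, fmToI_mult, Nat.cast_le]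

lemma fmToI_inj : Function.Injective (fmToI (K := K)) := by
  intro f g hfg
  ext p
  have h1 := fmToI_mult f p
  rw [hfg, fmToI_mult g p] at h1
  exact_mod_cast h1.symm

lemma fmToI_surj (I : Ideal (𝓞 K)) (hI : I ≠ ⊥) : ∃ f, fmToI f = I := by
  revert hI
  refine UniqueFactorizationMonoid.induction_on_prime I ?_ ?_ ?_
  · intro h; exact absurd rfl h
  · intro J hJ _
    refine ⟨0, ?_⟩
    rw [fmToI, Finsupp.prod_zero_index]
    rw [Ideal.one_eq_top]; exact (Ideal.isUnit_iff.1 hJ).symm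
  · intro J p hJ hp ih _
    obtain ⟨f, hf⟩ := ih hJ
    refine ⟨Finsupp.single ⟨p, Ideal.isPrime_of_prime hp, hp.ne_zero⟩ 1 + f, ?_⟩
    rw [fmToI, Finsupp.prod_add_index', Finsupp.prod_single_index, pow_one]
    · rw [← hf]; rfl
    · rw [pow_zero]
    · intro a; rw [pow_zero]
    · intro a b c; rw [pow_add]

lemma fmToI_norm (f : FmP K →₀ ℕ) :
    (Ideal.absNorm (fmToI f) : ℝ) = f.prod fun p k => (Ideal.absNorm p.1 : ℝ) ^ k := by
  rw [fmToI, map_finsuppProd]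
  simp only [Finsupp.prod]
  push_cast
  simp

/-- the equivalence with nonzero ideals -/
def fmEquiv : (FmP K →₀ ℕ) ≃ nonZeroDivisors (Ideal (𝓞 K)) :=
  Equiv.ofBijective (fun f => ⟨fmToI f, mem_nonZeroDivisors_of_ne_zero (fmToI_ne f)⟩) (by
    constructor
    · intro f g h; exact fmToI_inj (Subtype.ext_iff.1 h)
    · intro I
      obtain ⟨f, hf⟩ := fmToI_surj I.1 (nonZeroDivisors.ne_zero I.2)
      exact ⟨f, Subtype.ext hf⟩)

/-- restricted equivalence -/
def fmEquivLe (x : ℝ) : {f : FmP K →₀ ℕ | (f.prod fun p k => (Ideal.absNorm p.1 : ℝ) ^ k) ≤ x} ≃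
    {I : nonZeroDivisors (Ideal (𝓞 K)) // (Ideal.absNorm (I : Ideal (𝓞 K)) : ℝ) ≤ x} :=
  fmEquiv.subtypeEquiv fun f => by
    show _ ≤ x ↔ (Ideal.absNorm (fmToI f) : ℝ) ≤ x
    rw [fmToI_norm]

lemma fm_fin (x : ℝ) :
    {f : FmP K →₀ ℕ | (f.prod fun p k => (Ideal.absNorm p.1 : ℝ) ^ k) ≤ x}.Finite := by
  have := fm_ideal_fin K x
  exact Set.finite_coe_iff.1 (Finite.of_equiv _ (fmEquivLe x).symm)

lemma fm_finP (x : ℝ) : {p : FmP K | (Ideal.absNorm p.1 : ℝ) ≤ x}.Finite := by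
  refine Set.Finite.of_injOn (f := fun p => Finsupp.single p 1) ?_ ?_ (fm_fin (K := K) x)
  · intro p hp
    simpa using hp
  · intro p _ q _ h
    exact Finsupp.single_left_injective one_ne_zero h

lemma fm_two_le (p : FmP K) : (2:ℝ) ≤ Ideal.absNorm p.1 := by
  have h0 : Ideal.absNorm p.1 ≠ 0 := fun h => p.2.2 (Ideal.absNorm_eq_zero_iff.1 h)
  have h1 : Ideal.absNorm p.1 ≠ 1 := fun h => p.2.1.ne_top (Ideal.absNorm_eq_one_iff.1 h)
  have : 2 ≤ Ideal.absNorm p.1 := by omega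
  exact_mod_cast this

lemma fm_prime_dvd (p : FmP K) (n : ℕ) (hn : Ideal.absNorm p.1 ≤ n) :
    p.1 ∣ Ideal.span {((primorial n : ℕ) : 𝓞 K)} := by
  rw [Ideal.dvd_span_singleton]
  have h0 : Ideal.absNorm p.1 ≠ 0 := fun h => p.2.2 (Ideal.absNorm_eq_zero_iff.1 h)
  have h1 := Ideal.absNorm_mem p.1
  obtain ⟨q, hq, hqd, hqp⟩ : ∃ q : ℕ, q.Prime ∧ q ∣ Ideal.absNorm p.1 ∧ (q : 𝓞 K) ∈ p.1 := by
    have h2 := Nat.prod_primeFactorsList h0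
    have h3 : ((Ideal.absNorm p.1).primeFactorsList.map (fun q : ℕ => (q : 𝓞 K))).prod ∈ p.1 := by
      rw [← Nat.cast_list_prod, h2]; exact h1
    have h4 := (p.2.1.multiset_prod_mem_iff_exists_mem
      (((Ideal.absNorm p.1).primeFactorsList.map (fun q : ℕ => (q : 𝓞 K)) : List (𝓞 K)) : Multiset (𝓞 K))).1
      (by rw [Multiset.prod_coe]; exact h3)
    obtain ⟨a, ha, hap⟩ := h4
    rw [Multiset.mem_coe, List.mem_map] at ha
    obtain ⟨q, hq, rfl⟩ := ha
    exact ⟨q, Nat.prime_of_mem_primeFactorsList hq, Nat.dvd_of_mem_primeFactorsList hq, hap⟩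
  have hqn : q ∣ primorial n := by
    rw [primorial]
    refine Finset.dvd_prod_of_mem (fun q : ℕ => q) ?_
    rw [Finset.mem_filter, Finset.mem_range]
    exact ⟨Nat.lt_succ_of_le ((Nat.le_of_dvd (Nat.pos_of_ne_zero h0) hqd).trans hn), hq⟩
  obtain ⟨m, hm⟩ := hqn
  rw [hm, Nat.cast_mul]
  exact Ideal.mul_mem_right _ _ hqp

lemma fm_cheb (x : ℝ) (hx : 1 ≤ x) :
    ∑ p ∈ (fm_finP (K := K) x).toFinset, Real.log (Ideal.absNorm p.1 : ℝ) ≤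
      (Module.finrank ℤ (𝓞 K) * Real.log 4) * x := by
  classical
  set s := (fm_finP (K := K) x).toFinset with hs
  have hmem : ∀ p ∈ s, Ideal.absNorm p.1 ≤ ⌊x⌋₊ := by
    intro p hp
    rw [hs, Set.Finite.mem_toFinset] at hp
    exact Nat.le_floor hp
  have hd : ∏ p ∈ s, p.1 ∣ Ideal.span {((primorial ⌊x⌋₊ : ℕ) : 𝓞 K)} := by
    have := Finset.prod_primes_dvd (s := s.map (Function.Embedding.subtype _))
      (Ideal.span {((primorial ⌊x⌋₊ : ℕ) : 𝓞 K)}) (by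
        intro a ha
        rw [Finset.mem_map] at ha
        obtain ⟨p, hp, rfl⟩ := ha
        exact FmP.prime p) (by
        intro a ha
        rw [Finset.mem_map] at ha
        obtain ⟨p, hp, rfl⟩ := ha
        exact fm_prime_dvd p _ (hmem p hp))
    rw [Finset.prod_map] at this
    exact this
  have h1 : ∏ p ∈ s, Ideal.absNorm p.1 ∣ primorial ⌊x⌋₊ ^ Module.finrank ℤ (𝓞 K) := by
    rw [← Ideal.absNorm_span_natCast, ← map_prod]
    exact map_dvd Ideal.absNorm hd
  have h2 : ∏ p ∈ s, Ideal.absNorm p.1 ≤ (4 ^ ⌊x⌋₊) ^ Module.finrank ℤ (𝓞 K) :=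
    (Nat.le_of_dvd (pow_pos (primorial_pos _) _) h1).trans
      (Nat.pow_le_pow_left (primorial_le_four_pow _) _)
  have hpos : ∀ p ∈ s, (0:ℝ) < Ideal.absNorm p.1 := fun p _ => by
    have := fm_two_le p; linarith
  rw [← Real.log_prod (fun p hp => (hpos p hp).ne')]
  have h3 : (∏ p ∈ s, (Ideal.absNorm p.1 : ℝ)) ≤ (4 ^ ⌊x⌋₊) ^ Module.finrank ℤ (𝓞 K) := by
    exact_mod_cast h2
  refine (Real.log_le_log (Finset.prod_pos hpos) h3).trans ?_
  rw [Real.log_pow, Real.log_pow]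
  have h4 := Nat.floor_le (by linarith : 0 ≤ x)
  have h5 : 0 ≤ Real.log 4 := Real.log_nonneg (by norm_num)
  calc _ ≤ (Module.finrank ℤ (𝓞 K) : ℝ) * (x * Real.log 4) := by gcongr
    _ = _ := by ring

lemma fm_sys_exists (K : Type*) [Field K] [NumberField K] :
    ∃ S : FmSys (FmP K), (∀ p, S.N p = Ideal.absNorm p.1) ∧ S.κ = kappaK K := by
  obtain ⟨θ, C, h1, h2, h3, h4⟩ := fm_ideal_count K
  refine ⟨{ N := fun p => Ideal.absNorm p.1, two_le := fm_two_le, fin := fm_fin, finP := fm_finP,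
            κ := kappaK K, θ := θ, C := C, Ch := Module.finrank ℤ (𝓞 K) * Real.log 4,
            κ_pos := fm_kappa_pos K, θ_ge := h1, θ_lt := h2, C_nonneg := h3,
            Ch_nonneg := by have : 0 ≤ Real.log 4 := Real.log_nonneg (by norm_num)
                            positivity
            count := ?_, cheb := fm_cheb }, fun p => rfl, rfl⟩
  intro x hx
  have := h4 x hx
  rw [← Nat.card_congr (fmEquivLe x)] at this
  rw [← Set.ncard_eq_toFinset_card _ (fm_fin x)]
  exact this

lemma fm_omega (f : FmP K →₀ ℕ) : omegaK (fmToI f) = f.support.card := by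
  rw [omegaK]
  have : {p : Ideal (𝓞 K) | p.IsPrime ∧ p ≠ ⊥ ∧ p ∣ fmToI f} =
      ((f.support.map (Function.Embedding.subtype _) : Finset (Ideal (𝓞 K))) : Set (Ideal (𝓞 K))) := by
    ext p
    simp only [Set.mem_ofPred_eq, Finset.coe_map, Set.mem_image, Finset.mem_coe, Finsupp.mem_support_iff,
      Function.Embedding.subtype_apply]
    constructor
    · rintro ⟨h1, h2, h3⟩
      refine ⟨⟨p, h1, h2⟩, ?_, rfl⟩
      have := (fmToI_dvd f ⟨p, h1, h2⟩ 1).1 (by rwa [pow_one])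
      omega
    · rintro ⟨q, hq, rfl⟩
      refine ⟨q.2.1, q.2.2, ?_⟩
      have := (fmToI_dvd f q 1).2 (by omega)
      rwa [pow_one] at this
  rw [this, Set.ncard_coe_finset, Finset.card_map]

lemma fm_hfull (h : ℕ) (f : FmP K →₀ ℕ) : HFullI h (fmToI f) ↔ ∀ p ∈ f.support, h ≤ f p := by
  rw [HFullI]
  constructor
  · intro H p hp
    refine (fmToI_dvd f p h).1 (H p.1 p.2.1 p.2.2 ?_)
    rw [Finsupp.mem_support_iff] at hp
    have := (fmToI_dvd f p 1).2 (by omega)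
    rwa [pow_one] at this
  · intro H p h1 h2 h3
    have h4 := (fmToI_dvd f ⟨p, h1, h2⟩ 1).1 (by rwa [pow_one])
    exact (fmToI_dvd f ⟨p, h1, h2⟩ h).2 (H _ (Finsupp.mem_support_iff.2 (by omega)))

lemma fm_nrm (S : FmSys (FmP K)) (hS : ∀ p, S.N p = Ideal.absNorm p.1) (f : FmP K →₀ ℕ) :
    S.nrm f = Ideal.absNorm (fmToI f) := by
  rw [fmToI_norm, FmSys.nrm]
  simp_rw [hS]

lemma fm_HF (S : FmSys (FmP K)) (hS : ∀ p, S.N p = Ideal.absNorm p.1) (h : ℕ) (x : ℝ) :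
    (∑ᶠ I ∈ {I : Ideal (𝓞 K) | I ≠ ⊥ ∧ HFullI h I ∧ (Ideal.absNorm I : ℝ) ≤ x},
            (omegaK I : ℝ)) = S.HF h x := by
  classical
  rw [FmSys.HF, ← finsum_mem_finset_eq_sum]
  symm
  refine finsum_mem_eq_of_bijOn fmToI ⟨?_, fmToI_inj.injOn, ?_⟩ ?_
  · intro f hf
    simp only [Finset.mem_coe, Finset.mem_filter, FmSys.mem_B, fm_nrm S hS] at hf
    exact ⟨fmToI_ne f, (fm_hfull h f).2 hf.2, hf.1⟩
  · rintro I ⟨h1, h2, h3⟩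
    obtain ⟨f, rfl⟩ := fmToI_surj I h1
    refine ⟨f, ?_, rfl⟩
    simp only [Finset.mem_coe, Finset.mem_filter, FmSys.mem_B, fm_nrm S hS]
    exact ⟨h3, (fm_hfull h f).1 h2⟩
  · intro f _
    rw [fm_omega]

lemma fm_Mm (S : FmSys (FmP K)) (hS : ∀ p, S.N p = Ideal.absNorm p.1) (x : ℝ) :
    (∑ᶠ p ∈ {p : Ideal (𝓞 K) | p.IsPrime ∧ p ≠ ⊥ ∧ (Ideal.absNorm p : ℝ) ≤ x},
        1 / (Ideal.absNorm p : ℝ)) = S.Mm x := by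
  rw [FmSys.Mm, ← finsum_mem_finset_eq_sum]
  symm
  refine finsum_mem_eq_of_bijOn Subtype.val ⟨?_, Subtype.val_injective.injOn, ?_⟩ ?_
  · intro p hp
    rw [Finset.mem_coe, FmSys.mem_PB, hS] at hp
    exact ⟨p.2.1, p.2.2, hp⟩
  · rintro p ⟨h1, h2, h3⟩
    refine ⟨⟨p, h1, h2⟩, ?_, rfl⟩
    rw [Finset.mem_coe, FmSys.mem_PB, hS]
    exact h3
  · intro p _
    rw [hS]

end FmConcrete

/-- First moment of `ω` over `h`-full ideals of a number field. -/
theorem first_moment_omega_hfull_ideals (K : Type*) [Field K] [NumberField K]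
    (h : ℕ) (hh : 2 ≤ h) (A : ℝ) (hA : MertensK K A) :
    (fun x : ℝ =>
        (∑ᶠ I ∈ {I : Ideal (𝓞 K) | I ≠ ⊥ ∧ HFullI h I ∧ (Ideal.absNorm I : ℝ) ≤ x},
            (omegaK I : ℝ))
          - kappaK K * gammaK K h * (x ^ (1 / (h : ℝ)) * Real.log (Real.log x))
          - kappaK K * gammaK K h * D1K K h A * x ^ (1 / (h : ℝ)))
      =O[atTop] fun x : ℝ => x ^ (1 / (h : ℝ)) / Real.log x := by
  obtain ⟨S, hS, hκ⟩ := fm_sys_exists K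
  have hA' : Tendsto (fun x => S.Mm x - Real.log (Real.log x)) atTop (𝓝 A) := by
    rw [MertensK] at hA
    simp_rw [fm_Mm S hS] at hA
    exact hA
  obtain ⟨C, hC⟩ := S.hfull_main h hh A hA'
  have hG : S.Gam h = gammaK K h := by
    rw [FmSys.Gam, gammaK]; simp_rw [hS]
  have hL : ∀ r, S.Lh h r = LhK K h r := by
    intro r; rw [FmSys.Lh, LhK]; simp_rw [hS]
  simp_rw [fm_HF S hS]
  refine IsBigO.of_bound C ?_
  filter_upwards [eventually_ge_atTop ((4:ℝ) ^ h)] with x hx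
  have hx1 : 1 ≤ x := le_trans (one_le_pow₀ (by norm_num)) hx
  have h1 := hC x hx
  rw [hG, hL, hL, hκ] at h1
  have h0 : 0 ≤ x ^ (1 / (h : ℝ)) / Real.log x :=
    div_nonneg (Real.rpow_nonneg (by linarith) _) (Real.log_nonneg hx1)
  rw [Real.norm_eq_abs, Real.norm_eq_abs, abs_of_nonneg h0, D1K]
  exact h1
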